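/- Let K be any field, and let G_12 ⊆ S_8 be the subgroup generated by the permutations Φ = (1,2,4)(5,6,8) and Ψ̃ = (1,3,5,7)(2,4,6,8); G_12 has order 24 and is isomorphic to SL(2,3). Then the fixed field K(x_1,…,x_8)^{G_12} is K-rational. -/

import Mathlib

noncomputable section

/-- The rational function field `K(x_i : i ∈ I)` over `K`, realized as the fraction field
of the multivariate polynomial ring. -/
abbrev RFF (K : Type) [Field K] (I : Type) := FractionRing (MvPolynomial I K)

/-- The image of the variable `x_i` in the rational function field `K(x_i : i ∈ I)`. -/
noncomputable def Xvar (K : Type) [Field K] (I : Type) (i : I) : RFF K I :=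
  algebraMap (MvPolynomial I K) (RFF K I) (MvPolynomial.X i)

/-- Permutations of the variables as `K`-algebra automorphisms of the polynomial ring. -/
def renameHom (K : Type) [Field K] (I : Type) :
    Equiv.Perm I →* (MvPolynomial I K ≃ₐ[K] MvPolynomial I K) where
  toFun σ := MvPolynomial.renameEquiv K σ
  map_one' := MvPolynomial.renameEquiv_refl K
  map_mul' σ τ := (MvPolynomial.renameEquiv_trans K τ σ).symm

/-- The action of permutations of the variables on `K(x_i : i ∈ I)` by `K`-automorphisms,
determined by `σ(x_i) = x_{σ(i)}`. -/
noncomputable def permHom (K : Type) [Field K] (I : Type) :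
    Equiv.Perm I →* (RFF K I ≃ₐ[K] RFF K I) :=
  (IsFractionRing.fieldEquivOfAlgEquivHom K (RFF K I)).comp (renameHom K I)

/-- The fixed field `K(x_i : i ∈ I)^G` of a group `G` of permutations of the variables. -/
noncomputable def fixedSub (K : Type) [Field K] (I : Type) (G : Subgroup (Equiv.Perm I)) :
    IntermediateField K (RFF K I) :=
  IntermediateField.fixedField (G.map (permHom K I))

/-- An extension `L/K` is `K`-rational if it is purely transcendental over `K`, i.e. generated
by finitely many algebraically independent elements. -/
def IsRatExt (K : Type) [Field K] (L : Type*) [Field L] [Algebra K L] : Prop :=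
  ∃ (n : ℕ) (t : Fin n → L), AlgebraicIndependent K t ∧
    IntermediateField.adjoin K (Set.range t) = ⊤

section general

open IntermediateField
open scoped IntermediateField.algebraAdjoinAdjoin

variable {K F : Type} [Field K] [Field F] [Algebra K F]

/-- Algebraic independence from a transcendence degree count. -/
theorem algInd_of_isAlgebraic (htr : (8 : Cardinal) ≤ Algebra.trdeg K F) (t : Fin 8 → F)
    (h : Algebra.IsAlgebraic (IntermediateField.adjoin K (Set.range t)) F) :
    AlgebraicIndependent K t := by
  have h1 : Algebra.IsAlgebraic (Algebra.adjoin K (Set.range t)) F := by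
    have : Algebra.IsAlgebraic (Algebra.adjoin K (Set.range t))
        (IntermediateField.adjoin K (Set.range t)) :=
      IsFractionRing.comap_isAlgebraic_iff (K := IntermediateField.adjoin K (Set.range t))
        (A := Algebra.adjoin K (Set.range t))
        (C := IntermediateField.adjoin K (Set.range t)) |>.2 inferInstance
    exact Algebra.IsAlgebraic.trans (Algebra.adjoin K (Set.range t))
      (IntermediateField.adjoin K (Set.range t)) F
  exact (Algebra.IsAlgebraic.isTranscendenceBasis_of_le_trdeg_of_finite K t (by simpa using htr)).1

theorem trdeg_RFF (K : Type) [Field K] : (8 : Cardinal) ≤ Algebra.trdeg K (RFF K (Fin 8)) := by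
  have : Algebra.IsAlgebraic (MvPolynomial (Fin 8) K) (RFF K (Fin 8)) :=
    IsFractionRing.comap_isAlgebraic_iff (K := RFF K (Fin 8)) |>.2 inferInstance
  have h := (IsTranscendenceBasis.mvPolynomial (Fin 8) K).algebraMap_comp (A := RFF K (Fin 8))
  have := h.cardinalMk_eq_trdeg
  rw [← this]; simp

/-- Adjoining a root of a monic polynomial of degree `d`. -/
theorem step_bound (M M' : IntermediateField K F) (α : F) (hM : M' = M ⊔ adjoin K {α})
    (p : Polynomial M) (hp : p.Monic) (hroot : Polynomial.aeval α p = 0) :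
    0 < relfinrank M M' ∧ relfinrank M M' ≤ p.natDegree := by
  have hle : M ≤ M' := hM ▸ le_sup_left
  rw [relfinrank_eq_finrank_of_le hle]
  have hIntegral : IsIntegral M α := ⟨p, hp, by simpa [Polynomial.aeval_def] using hroot⟩
  have he : extendScalars hle = adjoin M {α} := by
    apply IntermediateField.restrictScalars_injective K
    rw [extendScalars_restrictScalars, hM, restrictScalars_adjoin_eq_sup]
  rw [he, adjoin.finrank hIntegral]
  exact ⟨minpoly.natDegree_pos hIntegral, Polynomial.natDegree_le_of_dvd (minpoly.dvd M α hroot) hp.ne_zero⟩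

theorem step_cubic (M M' : IntermediateField K F) (α m2 m1 m0 : F) (hM : M' = M ⊔ adjoin K {α})
    (h2 : m2 ∈ M) (h1 : m1 ∈ M) (h0 : m0 ∈ M) (h : α ^ 3 + m2 * α ^ 2 + m1 * α + m0 = 0) :
    0 < relfinrank M M' ∧ relfinrank M M' ≤ 3 := by
  have hd : (Polynomial.C (⟨m2, h2⟩ : M) * Polynomial.X ^ 2 + Polynomial.C (⟨m1, h1⟩ : M) *
    Polynomial.X + Polynomial.C (⟨m0, h0⟩ : M)).degree < ((3 : ℕ) : WithBot ℕ) :=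
    lt_of_le_of_lt Polynomial.degree_quadratic_le (by norm_num)
  have := step_bound M M' α hM (Polynomial.X ^ 3 + (Polynomial.C (⟨m2, h2⟩ : M) *
    Polynomial.X ^ 2 + Polynomial.C (⟨m1, h1⟩ : M) *
    Polynomial.X + Polynomial.C (⟨m0, h0⟩ : M)))
    (Polynomial.monic_X_pow_add hd) (by
      simp only [map_add, map_mul, map_pow, Polynomial.aeval_X, Polynomial.aeval_C]
      rw [← h]; simp only [IntermediateField.algebraMap_apply]; ring)
  rwa [Polynomial.natDegree_add_eq_left_of_degree_lt (by simpa using hd),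
    Polynomial.natDegree_X_pow] at this

theorem step_quad (M M' : IntermediateField K F) (α m1 m0 : F) (hM : M' = M ⊔ adjoin K {α})
    (h1 : m1 ∈ M) (h0 : m0 ∈ M) (h : α ^ 2 + m1 * α + m0 = 0) :
    0 < relfinrank M M' ∧ relfinrank M M' ≤ 2 := by
  have hd : (Polynomial.C (⟨m1, h1⟩ : M) *
    Polynomial.X + Polynomial.C (⟨m0, h0⟩ : M)).degree < ((2 : ℕ) : WithBot ℕ) :=
    lt_of_le_of_lt Polynomial.degree_linear_le (by norm_num)
  have := step_bound M M' α hM (Polynomial.X ^ 2 + (Polynomial.C (⟨m1, h1⟩ : M) *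
    Polynomial.X + Polynomial.C (⟨m0, h0⟩ : M)))
    (Polynomial.monic_X_pow_add hd) (by
      simp only [map_add, map_mul, map_pow, Polynomial.aeval_X, Polynomial.aeval_C]
      rw [← h]; simp only [IntermediateField.algebraMap_apply]; ring)
  rwa [Polynomial.natDegree_add_eq_left_of_degree_lt (by simpa using hd),
    Polynomial.natDegree_X_pow] at this

/-- A tower of a cubic and three quadratic extensions has degree at most `24`. -/
theorem tower_bound (L : IntermediateField K F) (α β γ δ : F)
    (m2 m1 m0 p1 p0 q1 q0 r1 r0 : F)
    (hm2 : m2 ∈ L) (hm1 : m1 ∈ L) (hm0 : m0 ∈ L)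
    (hα : α ^ 3 + m2 * α ^ 2 + m1 * α + m0 = 0)
    (hp1 : p1 ∈ L ⊔ adjoin K {α}) (hp0 : p0 ∈ L ⊔ adjoin K {α})
    (hβ : β ^ 2 + p1 * β + p0 = 0)
    (hq1 : q1 ∈ L ⊔ adjoin K {α} ⊔ adjoin K {β}) (hq0 : q0 ∈ L ⊔ adjoin K {α} ⊔ adjoin K {β})
    (hγ : γ ^ 2 + q1 * γ + q0 = 0)
    (hr1 : r1 ∈ L ⊔ adjoin K {α} ⊔ adjoin K {β} ⊔ adjoin K {γ})
    (hr0 : r0 ∈ L ⊔ adjoin K {α} ⊔ adjoin K {β} ⊔ adjoin K {γ})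
    (hδ : δ ^ 2 + r1 * δ + r0 = 0)
    (htop : L ⊔ adjoin K {α} ⊔ adjoin K {β} ⊔ adjoin K {γ} ⊔ adjoin K {δ} = ⊤) :
    0 < Module.finrank L F ∧ Module.finrank L F ≤ 24 := by
  have s1 := step_cubic L _ α m2 m1 m0 rfl hm2 hm1 hm0 hα
  have s2 := step_quad _ _ β p1 p0 rfl hp1 hp0 hβ
  have s3 := step_quad _ _ γ q1 q0 rfl hq1 hq0 hγ
  have s4 := step_quad _ _ δ r1 r0 rfl hr1 hr0 hδ
  rw [htop] at s4
  set L1 := L ⊔ adjoin K {α}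
  set L2 := L1 ⊔ adjoin K {β}
  set L3 := L2 ⊔ adjoin K {γ}
  have l1 : L ≤ L1 := le_sup_left
  have l2 : L1 ≤ L2 := le_sup_left
  have l3 : L2 ≤ L3 := le_sup_left
  have e1 := relfinrank_mul_relfinrank l1 l2
  have e2 := relfinrank_mul_relfinrank (l1.trans l2) l3
  have e3 := relfinrank_mul_relfinrank ((l1.trans l2).trans l3) (le_top : L3 ≤ ⊤)
  rw [← relfinrank_top_right, ← e3, ← e2, ← e1]
  refine ⟨by have := s1.1; have := s2.1; have := s3.1; have := s4.1; positivity, ?_⟩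
  calc _ ≤ 3 * 2 * 2 * 2 := by
        gcongr
        exacts [s1.2, s2.2, s3.2, s4.2]
    _ = 24 := by norm_num

/-- The degree criterion for rationality of a fixed field. -/
theorem ratExt_of_degree (htr : (8 : Cardinal) ≤ Algebra.trdeg K F) (H : Subgroup (F ≃ₐ[K] F))
    [Finite H] (hcard : 24 ≤ Nat.card H) (t : Fin 8 → F)
    (hfix : ∀ i, t i ∈ IntermediateField.fixedField H)
    (hpos : 0 < Module.finrank (adjoin K (Set.range t)) F)
    (hle : Module.finrank (adjoin K (Set.range t)) F ≤ 24) :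
    IsRatExt K ↥(IntermediateField.fixedField H) := by
  set L := adjoin K (Set.range t) with hL
  have hLle : L ≤ IntermediateField.fixedField H := by
    rw [hL, adjoin_le_iff]; rintro _ ⟨i, rfl⟩; exact hfix i
  have hfd : FiniteDimensional L F := Module.finite_of_finrank_pos hpos
  have hc : Module.finrank (IntermediateField.fixedField H) F = Nat.card H := by
    have := Fintype.ofFinite H
    rw [Nat.card_eq_fintype_card]
    exact FixedPoints.finrank_eq_card H F
  have hmul := relfinrank_mul_finrank_top hLle
  have hone : relfinrank L (IntermediateField.fixedField H) = 1 := by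
    rw [hc] at hmul
    rcases Nat.lt_trichotomy (relfinrank L (IntermediateField.fixedField H)) 1 with h | h | h
    · have : relfinrank L (IntermediateField.fixedField H) = 0 := by omega
      rw [this] at hmul; omega
    · exact h
    · nlinarith
  have heq : L = IntermediateField.fixedField H :=
    le_antisymm hLle (relfinrank_eq_one_iff.1 hone)
  have hind := algInd_of_isAlgebraic htr t (by rw [← hL]; infer_instance)
  refine ⟨8, fun i => ⟨t i, hfix i⟩, ?_, ?_⟩
  · exact AlgebraicIndependent.of_comp (IntermediateField.fixedField H).val hind
  · apply IntermediateField.lift_injective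
    rw [IntermediateField.lift_adjoin, IntermediateField.lift_top]
    refine Eq.trans ?_ (hL.symm.trans heq)
    congr 1
    ext x; simp

/-- Vandermonde recovery. -/
theorem vander_mem (M : IntermediateField K F) (y0 y1 y2 y3 s0 s1 s2 s3 : F)
    (h0 : y0 ∈ M) (h1 : y1 ∈ M) (h2 : y2 ∈ M) (h3 : y3 ∈ M)
    (n1 : y0 - y1 ≠ 0) (n2 : y0 - y2 ≠ 0) (n3 : y0 - y3 ≠ 0)
    (T0 : s0 + s1 + s2 + s3 ∈ M)
    (T1 : y0 * s0 + y1 * s1 + y2 * s2 + y3 * s3 ∈ M)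
    (T2 : y0 ^ 2 * s0 + y1 ^ 2 * s1 + y2 ^ 2 * s2 + y3 ^ 2 * s3 ∈ M)
    (T3 : y0 ^ 3 * s0 + y1 ^ 3 * s1 + y2 ^ 3 * s2 + y3 ^ 3 * s3 ∈ M) : s0 ∈ M := by
  have : s0 = ((y0 ^ 3 * s0 + y1 ^ 3 * s1 + y2 ^ 3 * s2 + y3 ^ 3 * s3)
      - (y1 + y2 + y3) * (y0 ^ 2 * s0 + y1 ^ 2 * s1 + y2 ^ 2 * s2 + y3 ^ 2 * s3)
      + (y1 * y2 + y2 * y3 + y3 * y1) * (y0 * s0 + y1 * s1 + y2 * s2 + y3 * s3)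
      - y1 * y2 * y3 * (s0 + s1 + s2 + s3)) / ((y0 - y1) * (y0 - y2) * (y0 - y3)) := by
    field_simp; ring
  rw [this]
  have hy : y1 * y2 + y2 * y3 + y3 * y1 ∈ M :=
    add_mem (add_mem (mul_mem h1 h2) (mul_mem h2 h3)) (mul_mem h3 h1)
  exact div_mem (sub_mem (add_mem (sub_mem T3 (mul_mem (add_mem (add_mem h1 h2) h3) T2))
    (mul_mem hy T1)) (mul_mem (mul_mem (mul_mem h1 h2) h3) T0))
    (mul_mem (mul_mem (sub_mem h0 h1) (sub_mem h0 h2)) (sub_mem h0 h3))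

/-- Nonvanishing by specialization to one-variable polynomials. -/
theorem nz_of_special {y : Fin 8 → F} (hy : AlgebraicIndependent K y) (P : MvPolynomial (Fin 8) K)
    (f : Fin 8 → Polynomial K) (h : MvPolynomial.aeval f P ≠ 0) : MvPolynomial.aeval y P ≠ 0 := by
  intro h0
  apply h
  rw [hy.eq_zero_of_aeval_eq_zero P h0]
  simp

end general

section group

theorem permHom_X (K : Type) [Field K] (σ : Equiv.Perm (Fin 8)) (i : Fin 8) :
    permHom K (Fin 8) σ (Xvar K (Fin 8) i) = Xvar K (Fin 8) (σ i) := by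
  simp [permHom, Xvar, renameHom]

theorem adjoin_X (K : Type) [Field K] (M : IntermediateField K (RFF K (Fin 8)))
    (h : ∀ i, Xvar K (Fin 8) i ∈ M) : M = ⊤ := by
  rw [eq_top_iff]
  intro z _
  obtain ⟨p, q, hq, rfl⟩ := IsFractionRing.div_surjective (A := MvPolynomial (Fin 8) K) z
  have key : ∀ p : MvPolynomial (Fin 8) K, algebraMap _ (RFF K (Fin 8)) p ∈ M := by
    intro p
    induction p using MvPolynomial.induction_on with
    | C a =>
      have : algebraMap (MvPolynomial (Fin 8) K) (RFF K (Fin 8)) (MvPolynomial.C a)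
        = algebraMap K (RFF K (Fin 8)) a := by
        rw [← MvPolynomial.algebraMap_eq, ← IsScalarTower.algebraMap_apply]
      rw [this]; exact M.algebraMap_mem a
    | add p q hp hq => rw [map_add]; exact add_mem hp hq
    | mul_X p i hp => rw [map_mul]; exact mul_mem hp (h i)
  exact div_mem (key p) (key q)

theorem permHom_inj (K : Type) [Field K] : Function.Injective (permHom K (Fin 8)) := by
  intro σ τ h
  ext1 i
  have h1 := permHom_X K σ i
  rw [h, permHom_X] at h1
  have h2 := IsFractionRing.injective (MvPolynomial (Fin 8) K) (RFF K (Fin 8)) h1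
  exact (MvPolynomial.X_injective h2).symm

/-- the generator `Φ` -/
def gPhi : Equiv.Perm (Fin 8) :=
  (Equiv.swap (0 : Fin 8) 1 * Equiv.swap 1 3) * (Equiv.swap (4 : Fin 8) 5 * Equiv.swap 5 7)

/-- the generator `Ψ` -/
def gPsi : Equiv.Perm (Fin 8) :=
  (Equiv.swap (0 : Fin 8) 2 * Equiv.swap 2 4 * Equiv.swap 4 6) *
    (Equiv.swap (1 : Fin 8) 3 * Equiv.swap 3 5 * Equiv.swap 5 7)

theorem card_G12 : 24 ≤ Nat.card (Subgroup.closure ({gPhi, gPsi} : Set (Equiv.Perm (Fin 8)))) := by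
  have hP : gPhi ∈ Subgroup.closure ({gPhi, gPsi} : Set (Equiv.Perm (Fin 8))) :=
    Subgroup.subset_closure (by simp)
  have hQ : gPsi ∈ Subgroup.closure ({gPhi, gPsi} : Set (Equiv.Perm (Fin 8))) :=
    Subgroup.subset_closure (by simp)
  let f : Fin 3 × Fin 4 × Fin 2 → Equiv.Perm (Fin 8) := fun k =>
    gPhi ^ (k.1 : ℕ) * gPsi ^ (k.2.1 : ℕ) * (gPhi * gPsi * gPhi ^ 2) ^ (k.2.2 : ℕ)
  have hf : ∀ k, f k ∈ Subgroup.closure ({gPhi, gPsi} : Set (Equiv.Perm (Fin 8))) := fun k =>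
    mul_mem (mul_mem (pow_mem hP _) (pow_mem hQ _))
      (pow_mem (mul_mem (mul_mem hP hQ) (pow_mem hP _)) _)
  have hinj : Function.Injective f := by
    have key : ∀ a b : Fin 3 × Fin 4 × Fin 2,
      (f a 0 = f b 0 ∧ f a 1 = f b 1 ∧ f a 2 = f b 2 ∧ f a 3 = f b 3) → a = b := by decide +kernel
    intro a b h
    exact key a b (by simp [h])
  have := Nat.card_le_card_of_injective
    (fun k => (⟨f k, hf k⟩ : Subgroup.closure ({gPhi, gPsi} : Set (Equiv.Perm (Fin 8)))))
    (fun a b h => hinj (congrArg Subtype.val h))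
  simpa using this

/-- Reduction of the theorem to explicit generators. -/
theorem reduce (K : Type) [Field K] (t : Fin 8 → RFF K (Fin 8))
    (hΦ : ∀ i, permHom K (Fin 8) gPhi (t i) = t i)
    (hΨ : ∀ i, permHom K (Fin 8) gPsi (t i) = t i)
    (hpos : 0 < Module.finrank (IntermediateField.adjoin K (Set.range t)) (RFF K (Fin 8)))
    (hle : Module.finrank (IntermediateField.adjoin K (Set.range t)) (RFF K (Fin 8)) ≤ 24) :
    IsRatExt K ↥(fixedSub K (Fin 8) (Subgroup.closure {gPhi, gPsi})) := by
  unfold fixedSub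
  have : Finite ((Subgroup.closure {gPhi, gPsi}).map (permHom K (Fin 8))) :=
    Set.Finite.image (permHom K (Fin 8)) (Set.toFinite _)
  apply ratExt_of_degree (trdeg_RFF K) _ _ t _ hpos hle
  · rw [Subgroup.card_map_of_injective (permHom_inj K)]
    exact card_G12
  · intro i
    rw [IntermediateField.mem_fixedField_iff]
    rintro _ ⟨g, hg, rfl⟩
    induction hg using Subgroup.closure_induction with
    | mem x hx =>
      rcases hx with rfl | rfl
      · exact hΦ i
      · exact hΨ i
    | one => simp
    | mul x y _ _ hx hy => rw [map_mul, AlgEquiv.mul_apply, hy, hx]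
    | inv x _ hx =>
      rw [map_inv]
      conv_lhs => rw [← hx]
      exact (permHom K (Fin 8) x).symm_apply_apply (t i)

end group

section masuda

/-- first cyclic invariant -/
def mP {F : Type} [Field F] (a b c : F) : F :=
  (a ^ 2 * b + b ^ 2 * c + c ^ 2 * a - 3 * a * b * c) /
    (a ^ 2 + b ^ 2 + c ^ 2 - a * b - b * c - c * a)

/-- second cyclic invariant -/
def mS {F : Type} [Field F] (a b c : F) : F :=
  (a * b ^ 2 + b * c ^ 2 + c * a ^ 2 - 3 * a * b * c) /
    (a ^ 2 + b ^ 2 + c ^ 2 - a * b - b * c - c * a)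

variable {F : Type} [Field F]

theorem mP_cycle (a b c : F) : mP b c a = mP a b c := by
  unfold mP; congr 1 <;> ring

theorem mS_cycle (a b c : F) : mS b c a = mS a b c := by
  unfold mS; congr 1 <;> ring

theorem map_mP {K : Type} [Field K] [Algebra K F] (σ : F ≃ₐ[K] F) (a b c : F) :
    σ (mP a b c) = mP (σ a) (σ b) (σ c) := by
  simp [mP, map_ofNat]

theorem map_mS {K : Type} [Field K] [Algebra K F] (σ : F ≃ₐ[K] F) (a b c : F) :
    σ (mS a b c) = mS (σ a) (σ b) (σ c) := by
  simp [mS, map_ofNat]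

theorem masuda_cubic (a b c : F) (hD : a ^ 2 + b ^ 2 + c ^ 2 - a * b - b * c - c * a ≠ 0) :
    a ^ 3 + (-(a + b + c)) * a ^ 2 + ((a + b + c) * (mS a b c + mP a b c)
      - 3 * (mP a b c ^ 2 - mP a b c * mS a b c + mS a b c ^ 2)) * a
      + (mP a b c ^ 3 + mS a b c ^ 3 - (a + b + c) * mP a b c * mS a b c) = 0 := by
  unfold mP mS
  generalize hd : a ^ 2 + b ^ 2 + c ^ 2 - a * b - b * c - c * a = d at *
  field_simp
  subst hd
  ring

theorem masuda_mobius (a b c : F) (hD : a ^ 2 + b ^ 2 + c ^ 2 - a * b - b * c - c * a ≠ 0) :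
    b * (a - mS a b c) = mP a b c * a - (mP a b c ^ 2 - mP a b c * mS a b c + mS a b c ^ 2) := by
  unfold mP mS
  generalize hd : a ^ 2 + b ^ 2 + c ^ 2 - a * b - b * c - c * a = d at *
  field_simp
  subst hd
  ring

theorem masuda_ne (a b c : F) (hD : a ^ 2 + b ^ 2 + c ^ 2 - a * b - b * c - c * a ≠ 0)
    (hab : a - b ≠ 0) (hac : a - c ≠ 0) : a - mS a b c ≠ 0 := by
  have : a - mS a b c = (a - b) * (a - c) ^ 2 /
      (a ^ 2 + b ^ 2 + c ^ 2 - a * b - b * c - c * a) := by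
    unfold mS
    generalize hd : a ^ 2 + b ^ 2 + c ^ 2 - a * b - b * c - c * a = d at *
    field_simp
    subst hd
    ring
  rw [this]
  exact div_ne_zero (mul_ne_zero hab (pow_ne_zero _ hac)) hD

theorem masuda_mem {K : Type} [Field K] [Algebra K F] (M : IntermediateField K F) (a b c : F)
    (hD : a ^ 2 + b ^ 2 + c ^ 2 - a * b - b * c - c * a ≠ 0)
    (hab : a - b ≠ 0) (hac : a - c ≠ 0) (hP : mP a b c ∈ M) (hS : mS a b c ∈ M)
    (he : a + b + c ∈ M) (ha : a ∈ M) : b ∈ M ∧ c ∈ M := by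
  have hb : b = (mP a b c * a - (mP a b c ^ 2 - mP a b c * mS a b c + mS a b c ^ 2)) /
      (a - mS a b c) := by
    rw [eq_div_iff (masuda_ne a b c hD hab hac)]
    exact masuda_mobius a b c hD
  have hb' : b ∈ M := by
    rw [hb]
    exact div_mem (sub_mem (mul_mem hP ha) (add_mem (sub_mem (pow_mem hP 2) (mul_mem hP hS))
      (pow_mem hS 2))) (sub_mem ha hS)
  refine ⟨hb', ?_⟩
  have : c = (a + b + c) - a - b := by ring
  rw [this]
  exact sub_mem (sub_mem he ha) hb'

theorem masuda_coeffs {K : Type} [Field K] [Algebra K F] (M : IntermediateField K F) (a b c : F)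
    (hP : mP a b c ∈ M) (hS : mS a b c ∈ M) (he : a + b + c ∈ M) :
    (-(a + b + c)) ∈ M ∧ ((a + b + c) * (mS a b c + mP a b c)
      - 3 * (mP a b c ^ 2 - mP a b c * mS a b c + mS a b c ^ 2)) ∈ M ∧
      (mP a b c ^ 3 + mS a b c ^ 3 - (a + b + c) * mP a b c * mS a b c) ∈ M := by
  refine ⟨neg_mem he, sub_mem (mul_mem he (add_mem hS hP)) (mul_mem (ofNat_mem M 3)
    (add_mem (sub_mem (pow_mem hP 2) (mul_mem hP hS)) (pow_mem hS 2))), sub_mem (add_mem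
    (pow_mem hP 3) (pow_mem hS 3)) (mul_mem (mul_mem he hP) hS)⟩

end masuda

section odd

open IntermediateField

variable {K F : Type} [Field K] [Field F] [Algebra K F]

/-- `a`-coordinate; `b`, `c` are obtained by cyclic permutation of `x, y, z`. -/
def oA (w x y z : F) : F := 2 * (x * y - w * z) / (w ^ 2 + x ^ 2 - y ^ 2 - z ^ 2)

/-- the companion coordinate of `oA`. -/
def oA' (w x y z : F) : F := 2 * (x * z + w * y) / (w ^ 2 + x ^ 2 - y ^ 2 - z ^ 2)

theorem oA'_eq (w x y z : F) (h1 : w ^ 2 + x ^ 2 - y ^ 2 - z ^ 2 ≠ 0)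
    (h2 : w ^ 2 + y ^ 2 - z ^ 2 - x ^ 2 ≠ 0) (h3 : w ^ 2 + z ^ 2 - x ^ 2 - y ^ 2 ≠ 0)
    (h : 1 + oA w x y z * oA w y z x * oA w z x y ≠ 0) :
    oA' w x y z = (- oA w z x y + oA w x y z * oA w y z x - oA w x y z ^ 2 * oA w z x y) /
      (1 + oA w x y z * oA w y z x * oA w z x y) := by
  have e1 : oA' w x y z * oA w y z x + oA' w y z x = - oA w x y z := by
    unfold oA oA'
    generalize g1 : w ^ 2 + x ^ 2 - y ^ 2 - z ^ 2 = r1 at *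
    generalize g2 : w ^ 2 + y ^ 2 - z ^ 2 - x ^ 2 = r2 at *
    field_simp
    subst g1 g2
    ring
  have e2 : oA' w y z x * oA w z x y + oA' w z x y = - oA w y z x := by
    unfold oA oA'
    generalize g1 : w ^ 2 + y ^ 2 - z ^ 2 - x ^ 2 = r1 at *
    generalize g2 : w ^ 2 + z ^ 2 - x ^ 2 - y ^ 2 = r2 at *
    field_simp
    subst g1 g2
    ring
  have e3 : oA' w z x y * oA w x y z + oA' w x y z = - oA w z x y := by
    unfold oA oA'
    generalize g1 : w ^ 2 + z ^ 2 - x ^ 2 - y ^ 2 = r1 at *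
    generalize g2 : w ^ 2 + x ^ 2 - y ^ 2 - z ^ 2 = r2 at *
    field_simp
    subst g1 g2
    ring
  rw [eq_div_iff h]
  linear_combination e3 - oA w x y z * e2 + oA w x y z * oA w z x y * e1

theorem oA'_mem (M : IntermediateField K F)
    (w x y z : F) (h1 : w ^ 2 + x ^ 2 - y ^ 2 - z ^ 2 ≠ 0)
    (h2 : w ^ 2 + y ^ 2 - z ^ 2 - x ^ 2 ≠ 0) (h3 : w ^ 2 + z ^ 2 - x ^ 2 - y ^ 2 ≠ 0)
    (h : 1 + oA w x y z * oA w y z x * oA w z x y ≠ 0)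
    (ha : oA w x y z ∈ M) (hb : oA w y z x ∈ M) (hc : oA w z x y ∈ M) : oA' w x y z ∈ M := by
  rw [oA'_eq w x y z h1 h2 h3 h]
  exact div_mem (sub_mem (add_mem (neg_mem hc) (mul_mem ha hb)) (mul_mem (pow_mem ha 2) hc))
    (add_mem (one_mem M) (mul_mem (mul_mem ha hb) hc))

theorem o_row (w x y z : F) (h1 : w ^ 2 + x ^ 2 - y ^ 2 - z ^ 2 ≠ 0) :
    (w ^ 2 + x ^ 2 - y ^ 2 - z ^ 2) ^ 2 * (1 + oA w x y z ^ 2 + oA' w x y z ^ 2) =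
      (w ^ 2 + x ^ 2 + y ^ 2 + z ^ 2) ^ 2 := by
  unfold oA oA'
  generalize g1 : w ^ 2 + x ^ 2 - y ^ 2 - z ^ 2 = r1 at *
  field_simp
  subst g1
  ring

theorem o_det (w x y z : F) (h1 : w ^ 2 + x ^ 2 - y ^ 2 - z ^ 2 ≠ 0)
    (h2 : w ^ 2 + y ^ 2 - z ^ 2 - x ^ 2 ≠ 0) (h3 : w ^ 2 + z ^ 2 - x ^ 2 - y ^ 2 ≠ 0) :
    (w ^ 2 + x ^ 2 - y ^ 2 - z ^ 2) * (w ^ 2 + y ^ 2 - z ^ 2 - x ^ 2) *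
    (w ^ 2 + z ^ 2 - x ^ 2 - y ^ 2) * (1 + oA w x y z * oA w y z x * oA w z x y +
      oA' w x y z * oA' w y z x * oA' w z x y - oA w x y z * oA' w y z x - oA w y z x * oA' w z x y
      - oA w z x y * oA' w x y z) = (w ^ 2 + x ^ 2 + y ^ 2 + z ^ 2) ^ 3 := by
  unfold oA oA'
  generalize g1 : w ^ 2 + x ^ 2 - y ^ 2 - z ^ 2 = r1 at *
  generalize g2 : w ^ 2 + y ^ 2 - z ^ 2 - x ^ 2 = r2 at *
  generalize g3 : w ^ 2 + z ^ 2 - x ^ 2 - y ^ 2 = r3 at *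
  field_simp
  subst g1 g2 g3
  ring

theorem o_off (w x y z : F) 
    (h2 : w ^ 2 + y ^ 2 - z ^ 2 - x ^ 2 ≠ 0) (h3 : w ^ 2 + z ^ 2 - x ^ 2 - y ^ 2 ≠ 0) :
    4 * w * x = (w ^ 2 + z ^ 2 - x ^ 2 - y ^ 2) * oA' w z x y -
      (w ^ 2 + y ^ 2 - z ^ 2 - x ^ 2) * oA w y z x := by
  unfold oA oA'
  rw [mul_div_cancel₀ _ h2, mul_div_cancel₀ _ h3]
  ring

theorem odd_tower (h2 : (2 : F) ≠ 0) (w x y z s0 s1 s2 s3 : F) (L : IntermediateField K F)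
    (hgen : ∀ M : IntermediateField K F, w ∈ M → x ∈ M → y ∈ M → z ∈ M → s0 ∈ M → s1 ∈ M →
      s2 ∈ M → s3 ∈ M → M = ⊤)
    (hw : w ≠ 0) (hN : w ^ 2 + x ^ 2 + y ^ 2 + z ^ 2 ≠ 0)
    (n1 : w ^ 2 + x ^ 2 - y ^ 2 - z ^ 2 ≠ 0)
    (n2 : w ^ 2 + y ^ 2 - z ^ 2 - x ^ 2 ≠ 0) (n3 : w ^ 2 + z ^ 2 - x ^ 2 - y ^ 2 ≠ 0)
    (hab : oA w x y z - oA w y z x ≠ 0) (hac : oA w x y z - oA w z x y ≠ 0)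
    (hD : oA w x y z ^ 2 + oA w y z x ^ 2 + oA w z x y ^ 2 - oA w x y z * oA w y z x
      - oA w y z x * oA w z x y - oA w z x y * oA w x y z ≠ 0)
    (h1abc : 1 + oA w x y z * oA w y z x * oA w z x y ≠ 0)
    (hwx : w ^ 2 - x ^ 2 ≠ 0) (hwy : w ^ 2 - y ^ 2 ≠ 0) (hwz : w ^ 2 - z ^ 2 ≠ 0)
    (hxy : x ^ 2 - y ^ 2 ≠ 0) (hxz : x ^ 2 - z ^ 2 ≠ 0) (hyz : y ^ 2 - z ^ 2 ≠ 0)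
    (gP : mP (oA w x y z) (oA w y z x) (oA w z x y) ∈ L)
    (gS : mS (oA w x y z) (oA w y z x) (oA w z x y) ∈ L)
    (gE : oA w x y z + oA w y z x + oA w z x y ∈ L)
    (gN : w ^ 2 + x ^ 2 + y ^ 2 + z ^ 2 ∈ L)
    (gT0 : s0 + s1 + s2 + s3 ∈ L)
    (gT1 : x ^ 2 * s0 + y ^ 2 * s1 + w ^ 2 * s2 + z ^ 2 * s3 ∈ L)
    (gT2 : (x ^ 2) ^ 2 * s0 + (y ^ 2) ^ 2 * s1 + (w ^ 2) ^ 2 * s2 + (z ^ 2) ^ 2 * s3 ∈ L)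
    (gT3 : (x ^ 2) ^ 3 * s0 + (y ^ 2) ^ 3 * s1 + (w ^ 2) ^ 3 * s2 + (z ^ 2) ^ 3 * s3 ∈ L) :
    0 < Module.finrank L F ∧ Module.finrank L F ≤ 24 := by
  have h4 : (4 : F) ≠ 0 := by
    have : (4 : F) = 2 * 2 := by norm_num
    rw [this]; exact mul_ne_zero h2 h2
  obtain ⟨c2, c1, c0⟩ := masuda_coeffs L _ _ _ gP gS gE
  have hN2 := pow_ne_zero 2 hN
  have row1 := o_row w x y z n1
  have row2 := o_row w y z x n2
  have d1 : 1 + oA w x y z ^ 2 + oA' w x y z ^ 2 ≠ 0 := by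
    intro h; rw [h, mul_zero] at row1; exact hN2 row1.symm
  have d2 : 1 + oA w y z x ^ 2 + oA' w y z x ^ 2 ≠ 0 := by
    intro h; rw [h, mul_zero] at row2
    exact hN2 (by linear_combination -row2)
  have det := o_det w x y z n1 n2 n3
  have off1 := o_off w x y z n2 n3
  have off2 := o_off w y z x n3 n1
  have off3 := o_off w z x y n1 n2
  set ρ1 := w ^ 2 + x ^ 2 - y ^ 2 - z ^ 2 with hρ1
  set ρ2 := w ^ 2 + y ^ 2 - z ^ 2 - x ^ 2 with hρ2
  set ρ3 := w ^ 2 + z ^ 2 - x ^ 2 - y ^ 2 with hρ3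
  -- consequences of membership
  have key : ∀ M : IntermediateField K F, L ≤ M → oA w x y z ∈ M →
      oA w y z x ∈ M ∧ oA w z x y ∈ M ∧ oA' w x y z ∈ M ∧ oA' w y z x ∈ M ∧ oA' w z x y ∈ M := by
    intro M hM ha
    obtain ⟨hb, hc⟩ := masuda_mem M _ _ _ hD hab hac (hM gP) (hM gS) (hM gE) ha
    refine ⟨hb, hc, oA'_mem M w x y z n1 n2 n3 h1abc ha hb hc,
      oA'_mem M w y z x n2 n3 n1 ?_ hb hc ha, oA'_mem M w z x y n3 n1 n2 ?_ hc ha hb⟩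
    · convert h1abc using 1; ring
    · convert h1abc using 1; ring
  have key3 : ∀ M : IntermediateField K F, L ≤ M → oA w x y z ∈ M → ρ1 ∈ M → ρ2 ∈ M →
      ρ3 ∈ M := by
    intro M hM ha h1 h2
    obtain ⟨hb, hc, ha', hb', hc'⟩ := key M hM ha
    have dne : ρ1 * ρ2 * (1 + oA w x y z * oA w y z x * oA w z x y +
      oA' w x y z * oA' w y z x * oA' w z x y - oA w x y z * oA' w y z x - oA w y z x * oA' w z x y
      - oA w z x y * oA' w x y z) ≠ 0 := by
      intro h
      apply pow_ne_zero 3 hN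
      rw [← det]
      linear_combination ρ3 * h
    have : ρ3 = (w ^ 2 + x ^ 2 + y ^ 2 + z ^ 2) ^ 3 / (ρ1 * ρ2 *
      (1 + oA w x y z * oA w y z x * oA w z x y +
      oA' w x y z * oA' w y z x * oA' w z x y - oA w x y z * oA' w y z x - oA w y z x * oA' w z x y
      - oA w z x y * oA' w x y z)) := by
      rw [eq_div_iff dne, ← det]; ring
    rw [this]
    exact div_mem (pow_mem (hM gN) 3) (mul_mem (mul_mem h1 h2) (sub_mem (sub_mem (sub_mem (add_mem
      (add_mem (one_mem M) (mul_mem (mul_mem ha hb) hc)) (mul_mem (mul_mem ha' hb') hc'))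
      (mul_mem ha hb')) (mul_mem hb hc')) (mul_mem hc ha')))
  have le1 : L ≤ L ⊔ adjoin K {oA w x y z} := le_sup_left
  have le2 : L ⊔ adjoin K {oA w x y z} ≤ L ⊔ adjoin K {oA w x y z} ⊔ adjoin K {ρ1} := le_sup_left
  have le3 : L ⊔ adjoin K {oA w x y z} ⊔ adjoin K {ρ1} ≤
    L ⊔ adjoin K {oA w x y z} ⊔ adjoin K {ρ1} ⊔ adjoin K {ρ2} := le_sup_left
  have le4 : L ⊔ adjoin K {oA w x y z} ⊔ adjoin K {ρ1} ⊔ adjoin K {ρ2} ≤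
    L ⊔ adjoin K {oA w x y z} ⊔ adjoin K {ρ1} ⊔ adjoin K {ρ2} ⊔ adjoin K {w} := le_sup_left
  have m1 : oA w x y z ∈ L ⊔ adjoin K {oA w x y z} :=
    (le_sup_right : _ ≤ L ⊔ adjoin K {oA w x y z}) (mem_adjoin_simple_self K _)
  have m2 : ρ1 ∈ L ⊔ adjoin K {oA w x y z} ⊔ adjoin K {ρ1} :=
    (le_sup_right : adjoin K {ρ1} ≤ _) (mem_adjoin_simple_self K _)
  have m3 : ρ2 ∈ L ⊔ adjoin K {oA w x y z} ⊔ adjoin K {ρ1} ⊔ adjoin K {ρ2} :=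
    (le_sup_right : adjoin K {ρ2} ≤ _) (mem_adjoin_simple_self K _)
  have m4 : w ∈ L ⊔ adjoin K {oA w x y z} ⊔ adjoin K {ρ1} ⊔ adjoin K {ρ2} ⊔ adjoin K {w} :=
    (le_sup_right : adjoin K {w} ≤ _) (mem_adjoin_simple_self K _)
  set L1 := L ⊔ adjoin K {oA w x y z} with hL1
  set L2 := L1 ⊔ adjoin K {ρ1} with hL2
  set L3 := L2 ⊔ adjoin K {ρ2} with hL3
  set L4 := L3 ⊔ adjoin K {w} with hL4
  obtain ⟨hb, hc, ha', hb', hc'⟩ := key L1 le1 m1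
  have mρ3 : ρ3 ∈ L3 := key3 L3 (le1.trans (le2.trans le3)) (le3 (le2 m1)) (le3 m2) m3
  have up : L1 ≤ L4 := le2.trans (le3.trans le4)
  have mw : ∀ {u v r r' : F}, 4 * w * u = r * v - r' → r * v - r' ∈ L4 → u ∈ L4 := by
    intro u v r r' h hm
    have : u = (r * v - r') / (4 * w) := by
      rw [eq_div_iff (mul_ne_zero h4 hw), ← h]; ring
    rw [this]
    exact div_mem hm (mul_mem (ofNat_mem L4 4) m4)
  have mx : x ∈ L4 := mw off1 (sub_mem (mul_mem (le4 mρ3) (up hc')) (mul_mem (le4 m3) (up hb)))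
  have my : y ∈ L4 := mw off2
    (sub_mem (mul_mem (le4 (le3 m2)) (up ha')) (mul_mem (le4 mρ3) (up hc)))
  have mz : z ∈ L4 := mw off3
    (sub_mem (mul_mem (le4 m3) (up hb')) (mul_mem (le4 (le3 m2)) (up m1)))
  have leL : L ≤ L4 := le1.trans up
  have sq : ∀ {u : F}, u ∈ L4 → u ^ 2 ∈ L4 := fun h => pow_mem h 2
  have nsub : ∀ {u v : F}, u - v ≠ 0 → v - u ≠ 0 := fun h h' => h (by linear_combination -h')
  refine tower_bound L (oA w x y z) ρ1 ρ2 w _ _ _ 0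
    (-((w ^ 2 + x ^ 2 + y ^ 2 + z ^ 2) ^ 2 / (1 + oA w x y z ^ 2 + oA' w x y z ^ 2))) 0
    (-((w ^ 2 + x ^ 2 + y ^ 2 + z ^ 2) ^ 2 / (1 + oA w y z x ^ 2 + oA' w y z x ^ 2))) 0
    (-(((w ^ 2 + x ^ 2 + y ^ 2 + z ^ 2) + ρ1 + ρ2 + ρ3) / 4)) c2 c1 c0
    (masuda_cubic _ _ _ hD) (zero_mem _) ?_ ?_ (zero_mem _) ?_ ?_ (zero_mem _) ?_ ?_ ?_
  · exact neg_mem (div_mem (pow_mem (le1 gN) 2) (add_mem (add_mem (one_mem _) (pow_mem m1 2))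
      (pow_mem ha' 2)))
  · rw [← row1]; field_simp; ring
  · exact neg_mem (div_mem (pow_mem (le2 (le1 gN)) 2) (add_mem (add_mem (one_mem _)
      (pow_mem (le2 hb) 2)) (pow_mem (le2 hb') 2)))
  · have : (w ^ 2 + x ^ 2 + y ^ 2 + z ^ 2) ^ 2 = ρ2 ^ 2 * (1 + oA w y z x ^ 2 + oA' w y z x ^ 2) := by
      rw [row2]; ring
    rw [this]; field_simp; ring
  · exact neg_mem (div_mem (add_mem (add_mem (add_mem (le3 (le2 (le1 gN))) (le3 m2)) m3) mρ3)
      (ofNat_mem _ 4))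
  · field_simp; rw [hρ1, hρ2, hρ3]; ring
  · apply hgen _ m4 mx my mz
    · exact vander_mem L4 (x ^ 2) (y ^ 2) (w ^ 2) (z ^ 2) s0 s1 s2 s3 (sq mx) (sq my) (sq m4) (sq mz)
        hxy (nsub hwx) hxz (leL gT0) (leL gT1) (leL gT2) (leL gT3)
    · refine vander_mem L4 (y ^ 2) (x ^ 2) (w ^ 2) (z ^ 2) s1 s0 s2 s3 (sq my) (sq mx) (sq m4) (sq mz)
        (nsub hxy) (nsub hwy) hyz ?_ ?_ ?_ ?_
      · convert leL gT0 using 1; ring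
      · convert leL gT1 using 1; ring
      · convert leL gT2 using 1; ring
      · convert leL gT3 using 1; ring
    · refine vander_mem L4 (w ^ 2) (x ^ 2) (y ^ 2) (z ^ 2) s2 s0 s1 s3 (sq m4) (sq mx) (sq my) (sq mz)
        hwx hwy hwz ?_ ?_ ?_ ?_
      · convert leL gT0 using 1; ring
      · convert leL gT1 using 1; ring
      · convert leL gT2 using 1; ring
      · convert leL gT3 using 1; ring
    · refine vander_mem L4 (z ^ 2) (x ^ 2) (y ^ 2) (w ^ 2) s3 s0 s1 s2 (sq mz) (sq mx) (sq my) (sq m4)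
        (nsub hxz) (nsub hyz) (nsub hwz) ?_ ?_ ?_ ?_
      · convert leL gT0 using 1; ring
      · convert leL gT1 using 1; ring
      · convert leL gT2 using 1; ring
      · convert leL gT3 using 1; ring

end odd

section oddmain

theorem gPhi_vals : gPhi 0 = 1 ∧ gPhi 1 = 3 ∧ gPhi 2 = 2 ∧ gPhi 3 = 0 ∧ gPhi 4 = 5 ∧ gPhi 5 = 7 ∧
    gPhi 6 = 6 ∧ gPhi 7 = 4 := by decide

theorem gPsi_vals : gPsi 0 = 2 ∧ gPsi 1 = 3 ∧ gPsi 2 = 4 ∧ gPsi 3 = 5 ∧ gPsi 4 = 6 ∧ gPsi 5 = 7 ∧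
    gPsi 6 = 0 ∧ gPsi 7 = 1 := by decide

theorem algInd_of_gen {K F : Type} [Field K] [Field F] [Algebra K F]
    (htr : (8 : Cardinal) ≤ Algebra.trdeg K F) (Y : Fin 8 → F)
    (h : IntermediateField.adjoin K (Set.range Y) = ⊤) : AlgebraicIndependent K Y := by
  apply algInd_of_isAlgebraic htr
  rw [h]
  refine ⟨fun z => ?_⟩
  exact isAlgebraic_algebraMap (⟨z, IntermediateField.mem_top⟩ : (⊤ : IntermediateField K F))

theorem map_oA {K F : Type} [Field K] [Field F] [Algebra K F] (σ : F ≃ₐ[K] F) (w x y z : F) :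
    σ (oA w x y z) = oA (σ w) (σ x) (σ y) (σ z) := by
  simp [oA, map_ofNat]

variable {K : Type} [Field K] {F : Type} [Field F] [Algebra K F]

theorem odd_ne {w x y z s0 s1 s2 s3 : F} (h2 : (2 : K) ≠ 0)
    (hY : AlgebraicIndependent K ![w, x, y, z, s0, s1, s2, s3]) :
    (w ≠ 0 ∧ w ^ 2 + x ^ 2 + y ^ 2 + z ^ 2 ≠ 0 ∧ w ^ 2 + x ^ 2 - y ^ 2 - z ^ 2 ≠ 0 ∧
    w ^ 2 + y ^ 2 - z ^ 2 - x ^ 2 ≠ 0 ∧ w ^ 2 + z ^ 2 - x ^ 2 - y ^ 2 ≠ 0) ∧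
    (oA w x y z - oA w y z x ≠ 0 ∧ oA w x y z - oA w z x y ≠ 0 ∧
    oA w x y z ^ 2 + oA w y z x ^ 2 + oA w z x y ^ 2 - oA w x y z * oA w y z x
      - oA w y z x * oA w z x y - oA w z x y * oA w x y z ≠ 0 ∧
    1 + oA w x y z * oA w y z x * oA w z x y ≠ 0) ∧
    (w ^ 2 - x ^ 2 ≠ 0 ∧ w ^ 2 - y ^ 2 ≠ 0 ∧ w ^ 2 - z ^ 2 ≠ 0 ∧
    x ^ 2 - y ^ 2 ≠ 0 ∧ x ^ 2 - z ^ 2 ≠ 0 ∧ y ^ 2 - z ^ 2 ≠ 0) := by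
  have q2 : (2 : Polynomial K) ≠ 0 := by
    intro h
    apply h2
    have := congrArg (Polynomial.eval 0) h
    simpa using this
  have qX : (Polynomial.X : Polynomial K) ≠ 0 := Polynomial.X_ne_zero
  have qm : (Polynomial.X ^ 2 - 1 : Polynomial K) ≠ 0 := by
    simpa using Polynomial.X_pow_sub_C_ne_zero (R := K) (n := 2) (by norm_num) 1
  have qp : (Polynomial.X ^ 2 + 1 : Polynomial K) ≠ 0 := by
    simpa using Polynomial.X_pow_add_C_ne_zero (R := K) (n := 2) (by norm_num) 1
  let fw : Fin 8 → Polynomial K := ![1, 0, 0, 0, 0, 0, 0, 0]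
  let fx : Fin 8 → Polynomial K := ![0, 1, 0, 0, 0, 0, 0, 0]
  let fy : Fin 8 → Polynomial K := ![0, 0, 1, 0, 0, 0, 0, 0]
  let fX : Fin 8 → Polynomial K := ![0, Polynomial.X, 1, 0, 0, 0, 0, 0]
  let W : MvPolynomial (Fin 8) K := MvPolynomial.X 0
  let X : MvPolynomial (Fin 8) K := MvPolynomial.X 1
  let Y : MvPolynomial (Fin 8) K := MvPolynomial.X 2
  let Z : MvPolynomial (Fin 8) K := MvPolynomial.X 3
  have n1 : w ^ 2 + x ^ 2 - y ^ 2 - z ^ 2 ≠ 0 := by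
    have := nz_of_special hY (W ^ 2 + X ^ 2 - Y ^ 2 - Z ^ 2) fw (by simp [fw, W, X, Y, Z])
    simpa [W, X, Y, Z] using this
  have n2 : w ^ 2 + y ^ 2 - z ^ 2 - x ^ 2 ≠ 0 := by
    have := nz_of_special hY (W ^ 2 + Y ^ 2 - Z ^ 2 - X ^ 2) fw (by simp [fw, W, X, Y, Z])
    simpa [W, X, Y, Z] using this
  have n3 : w ^ 2 + z ^ 2 - x ^ 2 - y ^ 2 ≠ 0 := by
    have := nz_of_special hY (W ^ 2 + Z ^ 2 - X ^ 2 - Y ^ 2) fw (by simp [fw, W, X, Y, Z])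
    simpa [W, X, Y, Z] using this
  refine ⟨⟨?_, ?_, n1, n2, n3⟩, ⟨?_, ?_, ?_, ?_⟩, ⟨?_, ?_, ?_, ?_, ?_, ?_⟩⟩
  · have := nz_of_special hY W fw (by simp [fw, W])
    simpa [W, X, Y, Z] using this
  · have := nz_of_special hY (W ^ 2 + X ^ 2 + Y ^ 2 + Z ^ 2) fw (by simp [fw, W, X, Y, Z])
    simpa [W, X, Y, Z] using this
  · have := nz_of_special hY ((2 * (X * Y - W * Z)) * (W ^ 2 + Y ^ 2 - Z ^ 2 - X ^ 2)
        - (W ^ 2 + X ^ 2 - Y ^ 2 - Z ^ 2) * (2 * (Y * Z - W * X))) fX (by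
      have : (2 * Polynomial.X) * (-(Polynomial.X ^ 2 - 1)) ≠ (0 : Polynomial K) :=
        mul_ne_zero (mul_ne_zero q2 qX) (neg_ne_zero.2 qm)
      simpa [fX, W, X, Y, Z, map_ofNat, sub_eq_add_neg, add_comm] using this)
    have hh : 2 * (x * y - w * z) * (w ^ 2 + y ^ 2 - z ^ 2 - x ^ 2)
        - (w ^ 2 + x ^ 2 - y ^ 2 - z ^ 2) * (2 * (y * z - w * x)) ≠ 0 := by
      simpa [W, X, Y, Z, map_ofNat] using this
    unfold oA
    rw [div_sub_div _ _ n1 n2]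
    exact div_ne_zero hh (mul_ne_zero n1 n2)
  · have := nz_of_special hY ((2 * (X * Y - W * Z)) * (W ^ 2 + Z ^ 2 - X ^ 2 - Y ^ 2)
        - (W ^ 2 + X ^ 2 - Y ^ 2 - Z ^ 2) * (2 * (Z * X - W * Y))) fX (by
      have : (2 * Polynomial.X) * (-(Polynomial.X ^ 2) - 1) ≠ (0 : Polynomial K) := by
        refine mul_ne_zero (mul_ne_zero q2 qX) ?_
        intro h; apply qp; linear_combination -h
      simpa [fX, W, X, Y, Z, map_ofNat] using this)
    have hh : 2 * (x * y - w * z) * (w ^ 2 + z ^ 2 - x ^ 2 - y ^ 2)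
        - (w ^ 2 + x ^ 2 - y ^ 2 - z ^ 2) * (2 * (z * x - w * y)) ≠ 0 := by
      simpa [W, X, Y, Z, map_ofNat] using this
    unfold oA
    rw [div_sub_div _ _ n1 n3]
    exact div_ne_zero hh (mul_ne_zero n1 n3)
  · let R1 := W ^ 2 + X ^ 2 - Y ^ 2 - Z ^ 2
    let R2 := W ^ 2 + Y ^ 2 - Z ^ 2 - X ^ 2
    let R3 := W ^ 2 + Z ^ 2 - X ^ 2 - Y ^ 2
    let A := 2 * (X * Y - W * Z)
    let B := 2 * (Y * Z - W * X)
    let C := 2 * (Z * X - W * Y)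
    have := nz_of_special hY ((A * R2 * R3) ^ 2 + (B * R1 * R3) ^ 2 + (C * R1 * R2) ^ 2
        - (A * R2 * R3) * (B * R1 * R3) - (B * R1 * R3) * (C * R1 * R2)
        - (C * R1 * R2) * (A * R2 * R3)) fX (by
      have : ((2 * Polynomial.X) * (1 - Polynomial.X ^ 2) * (-(Polynomial.X ^ 2) - 1)) ^ 2
          ≠ (0 : Polynomial K) := by
        refine pow_ne_zero 2 (mul_ne_zero (mul_ne_zero (mul_ne_zero q2 qX) ?_) ?_)
        · intro h; apply qm; linear_combination -h
        · intro h; apply qp; linear_combination -h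
      simpa only [fX, A, B, C, R1, R2, R3, W, X, Y, Z, map_ofNat, map_add, map_sub, map_mul,
        map_pow, MvPolynomial.aeval_X, Matrix.cons_val, mul_zero, zero_mul, sub_zero, add_zero,
        zero_add, zero_sub, mul_one, one_pow, ne_eq, OfNat.ofNat_ne_zero, not_false_eq_true,
        zero_pow] using this)
    have hh := this
    simp only [A, B, C, R1, R2, R3, W, X, Y, Z, map_ofNat, map_add, map_sub, map_mul,
        map_pow, MvPolynomial.aeval_X, Matrix.cons_val] at hh
    intro h
    apply hh
    have ea : oA w x y z * (w ^ 2 + x ^ 2 - y ^ 2 - z ^ 2) = 2 * (x * y - w * z) :=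
      div_mul_cancel₀ _ n1
    have eb : oA w y z x * (w ^ 2 + y ^ 2 - z ^ 2 - x ^ 2) = 2 * (y * z - w * x) :=
      div_mul_cancel₀ _ n2
    have ec : oA w z x y * (w ^ 2 + z ^ 2 - x ^ 2 - y ^ 2) = 2 * (z * x - w * y) :=
      div_mul_cancel₀ _ n3
    rw [← ea, ← eb, ← ec]
    linear_combination ((w ^ 2 + x ^ 2 - y ^ 2 - z ^ 2) * (w ^ 2 + y ^ 2 - z ^ 2 - x ^ 2)
      * (w ^ 2 + z ^ 2 - x ^ 2 - y ^ 2)) ^ 2 * h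
  · have := nz_of_special hY ((W ^ 2 + X ^ 2 - Y ^ 2 - Z ^ 2) * (W ^ 2 + Y ^ 2 - Z ^ 2 - X ^ 2)
        * (W ^ 2 + Z ^ 2 - X ^ 2 - Y ^ 2) + (2 * (X * Y - W * Z)) * (2 * (Y * Z - W * X))
        * (2 * (Z * X - W * Y))) fw (by simp [fw, W, X, Y, Z])
    have hh := this
    simp only [W, X, Y, Z, map_ofNat, map_add, map_sub, map_mul,
        map_pow, MvPolynomial.aeval_X, Matrix.cons_val] at hh
    intro h
    apply hh
    have ea : oA w x y z * (w ^ 2 + x ^ 2 - y ^ 2 - z ^ 2) = 2 * (x * y - w * z) :=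
      div_mul_cancel₀ _ n1
    have eb : oA w y z x * (w ^ 2 + y ^ 2 - z ^ 2 - x ^ 2) = 2 * (y * z - w * x) :=
      div_mul_cancel₀ _ n2
    have ec : oA w z x y * (w ^ 2 + z ^ 2 - x ^ 2 - y ^ 2) = 2 * (z * x - w * y) :=
      div_mul_cancel₀ _ n3
    rw [← ea, ← eb, ← ec]
    linear_combination ((w ^ 2 + x ^ 2 - y ^ 2 - z ^ 2) * (w ^ 2 + y ^ 2 - z ^ 2 - x ^ 2)
      * (w ^ 2 + z ^ 2 - x ^ 2 - y ^ 2)) * h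
  · have := nz_of_special hY (W ^ 2 - X ^ 2) fw (by simp [fw, W, X])
    simp only [W, X, map_sub, map_pow, MvPolynomial.aeval_X, Matrix.cons_val] at this
    exact this
  · have := nz_of_special hY (W ^ 2 - Y ^ 2) fw (by simp [fw, W, Y])
    simp only [W, Y, map_sub, map_pow, MvPolynomial.aeval_X, Matrix.cons_val] at this
    exact this
  · have := nz_of_special hY (W ^ 2 - Z ^ 2) fw (by simp [fw, W, Z])
    simp only [W, Z, map_sub, map_pow, MvPolynomial.aeval_X, Matrix.cons_val] at this
    exact this
  · have := nz_of_special hY (X ^ 2 - Y ^ 2) fx (by simp [fx, X, Y])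
    simp only [X, Y, map_sub, map_pow, MvPolynomial.aeval_X, Matrix.cons_val] at this
    exact this
  · have := nz_of_special hY (X ^ 2 - Z ^ 2) fx (by simp [fx, X, Z])
    simp only [X, Z, map_sub, map_pow, MvPolynomial.aeval_X, Matrix.cons_val] at this
    exact this
  · have := nz_of_special hY (Y ^ 2 - Z ^ 2) fy (by simp [fy, Y, Z])
    simp only [Y, Z, map_sub, map_pow, MvPolynomial.aeval_X, Matrix.cons_val] at this
    exact this

/-- The eight generators when `char K ≠ 2`. -/
def oddGen (w x y z s0 s1 s2 s3 : F) : Fin 8 → F :=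
  ![mP (oA w x y z) (oA w y z x) (oA w z x y), mS (oA w x y z) (oA w y z x) (oA w z x y),
    oA w x y z + oA w y z x + oA w z x y, w ^ 2 + x ^ 2 + y ^ 2 + z ^ 2,
    s0 + s1 + s2 + s3, x ^ 2 * s0 + y ^ 2 * s1 + w ^ 2 * s2 + z ^ 2 * s3,
    (x ^ 2) ^ 2 * s0 + (y ^ 2) ^ 2 * s1 + (w ^ 2) ^ 2 * s2 + (z ^ 2) ^ 2 * s3,
    (x ^ 2) ^ 3 * s0 + (y ^ 2) ^ 3 * s1 + (w ^ 2) ^ 3 * s2 + (z ^ 2) ^ 3 * s3]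

theorem map_oddGen (σ : F ≃ₐ[K] F) (w x y z s0 s1 s2 s3 : F) (i : Fin 8) :
    σ (oddGen w x y z s0 s1 s2 s3 i) =
      oddGen (σ w) (σ x) (σ y) (σ z) (σ s0) (σ s1) (σ s2) (σ s3) i := by
  fin_cases i <;> simp [oddGen, map_mP, map_mS, map_oA]

theorem oddGen_phi (w x y z s0 s1 s2 s3 : F) :
    oddGen w y z x s1 s3 s2 s0 = oddGen w x y z s0 s1 s2 s3 := by
  unfold oddGen
  rw [mP_cycle, mS_cycle]
  congr 2
  congr 1
  · ring
  congr 1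
  · ring
  congr 1
  · ring
  congr 1
  · ring
  congr 1
  · ring
  congr 1
  · ring

theorem oddGen_psi (w x y z s0 s1 s2 s3 : F) :
    oddGen x (-w) z (-y) s2 s3 s0 s1 = oddGen w x y z s0 s1 s2 s3 := by
  have ea : oA x (-w) z (-y) = oA w x y z := by
    unfold oA; congr 1 <;> ring
  have eb : oA x z (-y) (-w) = oA w y z x := by
    unfold oA
    rw [← neg_div_neg_eq]; congr 1 <;> ring
  have ec : oA x (-y) (-w) z = oA w z x y := by
    unfold oA
    rw [← neg_div_neg_eq]; congr 1 <;> ring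
  unfold oddGen
  rw [ea, eb, ec]
  congr 4
  · ring
  congr 1
  · ring
  congr 1
  · ring
  congr 1
  · ring
  congr 1
  · ring

theorem odd_case (K : Type) [Field K] (h2 : (2 : K) ≠ 0) :
    IsRatExt K ↥(fixedSub K (Fin 8) (Subgroup.closure {gPhi, gPsi})) := by
  have hF2 : (2 : RFF K (Fin 8)) ≠ 0 := by
    have := (map_ne_zero (algebraMap K (RFF K (Fin 8)))).2 h2
    simpa only [map_ofNat] using this
  let X := Xvar K (Fin 8)
  have hgen : ∀ M : IntermediateField K (RFF K (Fin 8)), X 2 - X 6 ∈ M → X 4 - X 0 ∈ M →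
      X 5 - X 1 ∈ M → X 7 - X 3 ∈ M → X 0 + X 4 ∈ M → X 1 + X 5 ∈ M →
      X 2 + X 6 ∈ M → X 3 + X 7 ∈ M → M = ⊤ := by
    intro M hw hx hy hz h0 h1 h2 h3
    have half : ∀ u v : RFF K (Fin 8), u - v ∈ M → v + u ∈ M → u ∈ M ∧ v ∈ M := by
      intro u v h h'
      have e1 : u = ((v + u) + (u - v)) / 2 := by field_simp; ring
      have e2 : v = ((v + u) - (u - v)) / 2 := by field_simp; ring
      constructor
      · rw [e1]; exact div_mem (add_mem h' h) (ofNat_mem M 2)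
      · rw [e2]; exact div_mem (sub_mem h' h) (ofNat_mem M 2)
    have a0 := half _ _ hx h0
    have a1 := half _ _ hy h1
    have a2 := half _ _ hw (by rw [add_comm]; exact h2)
    have a3 := half _ _ hz h3
    apply adjoin_X
    intro i
    fin_cases i
    exacts [a0.2, a1.2, a2.1, a3.2, a0.1, a1.1, a2.2, a3.1]
  have hY : AlgebraicIndependent K ![X 2 - X 6, X 4 - X 0, X 5 - X 1, X 7 - X 3,
      X 0 + X 4, X 1 + X 5, X 2 + X 6, X 3 + X 7] := by
    apply algInd_of_gen (trdeg_RFF K)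
    have hm := fun i => IntermediateField.subset_adjoin K (Set.range ![X 2 - X 6, X 4 - X 0,
      X 5 - X 1, X 7 - X 3, X 0 + X 4, X 1 + X 5, X 2 + X 6, X 3 + X 7]) ⟨i, rfl⟩
    exact hgen _ (hm 0) (hm 1) (hm 2) (hm 3) (hm 4) (hm 5) (hm 6) (hm 7)
  obtain ⟨⟨p1, p2, p3, p4, p5⟩, ⟨q1, q2, q3, q4⟩, ⟨r1, r2, r3, r4, r5, r6⟩⟩ := odd_ne h2 hY
  set t := oddGen (X 2 - X 6) (X 4 - X 0) (X 5 - X 1) (X 7 - X 3)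
      (X 0 + X 4) (X 1 + X 5) (X 2 + X 6) (X 3 + X 7) with ht
  have hm := fun i => IntermediateField.subset_adjoin K (Set.range t) ⟨i, rfl⟩
  have hb := odd_tower hF2 (X 2 - X 6) (X 4 - X 0) (X 5 - X 1) (X 7 - X 3)
      (X 0 + X 4) (X 1 + X 5) (X 2 + X 6) (X 3 + X 7) (IntermediateField.adjoin K (Set.range t))
      hgen p1 p2 p3 p4 p5 q1 q2 q3 q4 r1 r2 r3 r4 r5 r6 (hm 0) (hm 1) (hm 2) (hm 3) (hm 4) (hm 5)
      (hm 6) (hm 7)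
  refine reduce K t ?_ ?_ hb.1 hb.2
  · intro i
    rw [ht, map_oddGen]
    obtain ⟨e0, e1, e2, e3, e4, e5, e6, e7⟩ := gPhi_vals
    simp only [X, map_sub, map_add, permHom_X, e0, e1, e2, e3, e4, e5, e6, e7]
    exact congrFun (oddGen_phi _ _ _ _ _ _ _ _) i
  · intro i
    rw [ht, map_oddGen]
    obtain ⟨e0, e1, e2, e3, e4, e5, e6, e7⟩ := gPsi_vals
    simp only [X, map_sub, map_add, permHom_X, e0, e1, e2, e3, e4, e5, e6, e7]
    have e := congrFun (oddGen_psi (X 2 - X 6) (X 4 - X 0) (X 5 - X 1) (X 7 - X 3)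
      (X 0 + X 4) (X 1 + X 5) (X 2 + X 6) (X 3 + X 7)) i
    refine Eq.trans ?_ e
    simp only [X, neg_sub]
    congr 1 <;> exact add_comm _ _

end oddmain

section even

open IntermediateField

section defs

variable {R : Type} [CommRing R]

/-- `t` -/
def eT (v0 v1 v2 v3 : R) : R := v0 + v1 + v2 + v3

/-- `d = t² + t + 1` -/
def eD (v0 v1 v2 v3 : R) : R := eT v0 v1 v2 v3 ^ 2 + eT v0 v1 v2 v3 + 1

/-- `ℓ` -/
def eL (v0 v1 v2 v3 : R) : R :=
  (eT v0 v1 v2 v3 + 1) * (v0 + v2) + (v1 + v2) + eT v0 v1 v2 v3 ^ 2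

/-- the `a`-coordinate -/
def eA (v0 v1 v2 v3 : R) : R :=
  eL v0 v1 v2 v3 ^ 2 + eD v0 v1 v2 v3 * eL v0 v1 v2 v3 + eT v0 v1 v2 v3

/-- `h₂` -/
def eH (v0 v1 v2 v3 : R) : R :=
  (v0 + v2) * (v1 + v2) + (v1 + v2) * (v3 + v2) + (v3 + v2) * (v0 + v2)

/-- the correction `h₀ - h₂` -/
def eE (v0 v1 v2 v3 : R) : R :=
  (1 + eT v0 v1 v2 v3) * (v0 + v2) + (v1 + v2) + eT v0 v1 v2 v3 + 1

/-- the invariant `T` -/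
def eI (v0 v1 v2 v3 : R) : R :=
  (v2 ^ 2 + v2) * eH v0 v1 v2 v3 + (v0 ^ 2 + v0) * (eH v0 v1 v2 v3 + eE v0 v1 v2 v3)
  + (v1 ^ 2 + v1) * (eH v0 v1 v2 v3 + eE v1 v3 v2 v0)
  + (v3 ^ 2 + v3) * (eH v0 v1 v2 v3 + eE v3 v0 v2 v1)

theorem map_eA {S : Type} [CommRing S] (f : R →+* S) (v0 v1 v2 v3 : R) :
    f (eA v0 v1 v2 v3) = eA (f v0) (f v1) (f v2) (f v3) := by
  simp [eA, eL, eD, eT]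

theorem map_eI {S : Type} [CommRing S] (f : R →+* S) (v0 v1 v2 v3 : R) :
    f (eI v0 v1 v2 v3) = eI (f v0) (f v1) (f v2) (f v3) := by
  simp [eI, eH, eE, eT]

variable [CharP R 2]

theorem eA_psi (v0 v1 v2 v3 : R) : eA v2 v3 (v0 + 1) (v1 + 1) = eA v0 v1 v2 v3 := by
  simp only [eA, eL, eD, eT]; grind

theorem eB_psi (v0 v1 v2 v3 : R) : eA v3 (v1 + 1) (v0 + 1) v2 = eA v1 v3 v2 v0 := by
  simp only [eA, eL, eD, eT]; grind

theorem eC_psi (v0 v1 v2 v3 : R) : eA (v1 + 1) v2 (v0 + 1) v3 = eA v3 v0 v2 v1 := by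
  simp only [eA, eL, eD, eT]; grind

theorem eABC (v0 v1 v2 v3 : R) : eA v0 v1 v2 v3 + eA v1 v3 v2 v0 + eA v3 v0 v2 v1 = eT v0 v1 v2 v3 := by
  simp only [eA, eL, eD, eT]; grind

theorem eT_psi (v0 v1 v2 v3 : R) : eT v2 v3 (v0 + 1) (v1 + 1) = eT v0 v1 v2 v3 := by
  simp only [eT]; grind

theorem eI_psi (v0 v1 v2 v3 : R) : eI v2 v3 (v0 + 1) (v1 + 1) = eI v0 v1 v2 v3 := by
  simp only [eI, eH, eE, eT]; grind

theorem eI_phi (v0 v1 v2 v3 : R) : eI v1 v3 v2 v0 = eI v0 v1 v2 v3 := by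
  simp only [eI, eH, eE, eT]; ring

theorem eT_phi (v0 v1 v2 v3 : R) : eT v1 v3 v2 v0 = eT v0 v1 v2 v3 := by
  simp only [eT]; ring

/-- recovery of `p` -/
theorem eP_eq (v0 v1 v2 v3 : R) : (v0 + v2) * eD v0 v1 v2 v3 =
    (eL v1 v3 v2 v0 + eT v0 v1 v2 v3 ^ 2 + eT v0 v1 v2 v3) +
      eT v0 v1 v2 v3 * (eL v0 v1 v2 v3 + eT v0 v1 v2 v3 ^ 2) := by
  simp only [eL, eD, eT]; grind

theorem eQ_eq (v0 v1 v2 v3 : R) : v1 + v2 = eL v0 v1 v2 v3 + eT v0 v1 v2 v3 ^ 2 +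
    (eT v0 v1 v2 v3 + 1) * (v0 + v2) := by
  simp only [eL, eT]; grind

theorem eR_eq (v0 v1 v2 v3 : R) : v3 + v2 = eT v0 v1 v2 v3 + (v0 + v2) + (v1 + v2) := by
  simp only [eT]; grind

/-- the quadratic equation for `v₂`, with `p = v₀ + v₂`, `q = v₁ + v₂`, `r = v₃ + v₂` -/
theorem eI_eq (v0 v1 v2 v3 : R) : eD v0 v1 v2 v3 * (v2 ^ 2 + v2) = eI v0 v1 v2 v3
  + ((v0 + v2) ^ 2 + (v0 + v2)) * (eH v0 v1 v2 v3 + eE v0 v1 v2 v3)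
  + ((v1 + v2) ^ 2 + (v1 + v2)) * (eH v0 v1 v2 v3 + eE v1 v3 v2 v0)
  + ((v3 + v2) ^ 2 + (v3 + v2)) * (eH v0 v1 v2 v3 + eE v3 v0 v2 v1) := by
  simp only [eI, eH, eE, eD, eT]; grind

theorem eA_rel (v0 v1 v2 v3 : R) : eL v0 v1 v2 v3 ^ 2 + eD v0 v1 v2 v3 * eL v0 v1 v2 v3 +
    (eA v0 v1 v2 v3 + eT v0 v1 v2 v3) = 0 := by
  simp only [eA]; grind

end defs

end even

section evenmain

open IntermediateField

variable {K : Type} [Field K] {F : Type} [Field F] [Algebra K F]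

theorem even_tower [CharP F 2] (v0 v1 v2 v3 s0 s1 s2 s3 : F) (L : IntermediateField K F)
    (hgen : ∀ M : IntermediateField K F, v0 ∈ M → v1 ∈ M → v2 ∈ M → v3 ∈ M → s0 ∈ M → s1 ∈ M →
      s2 ∈ M → s3 ∈ M → M = ⊤)
    (hd : eD v0 v1 v2 v3 ≠ 0)
    (hab : eA v0 v1 v2 v3 - eA v1 v3 v2 v0 ≠ 0) (hac : eA v0 v1 v2 v3 - eA v3 v0 v2 v1 ≠ 0)
    (hD : eA v0 v1 v2 v3 ^ 2 + eA v1 v3 v2 v0 ^ 2 + eA v3 v0 v2 v1 ^ 2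
      - eA v0 v1 v2 v3 * eA v1 v3 v2 v0
      - eA v1 v3 v2 v0 * eA v3 v0 v2 v1 - eA v3 v0 v2 v1 * eA v0 v1 v2 v3 ≠ 0)
    (h01 : (v0 ^ 2 + v0) - (v1 ^ 2 + v1) ≠ 0) (h02 : (v0 ^ 2 + v0) - (v2 ^ 2 + v2) ≠ 0)
    (h03 : (v0 ^ 2 + v0) - (v3 ^ 2 + v3) ≠ 0) (h12 : (v1 ^ 2 + v1) - (v2 ^ 2 + v2) ≠ 0)
    (h13 : (v1 ^ 2 + v1) - (v3 ^ 2 + v3) ≠ 0) (h23 : (v2 ^ 2 + v2) - (v3 ^ 2 + v3) ≠ 0)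
    (gP : mP (eA v0 v1 v2 v3) (eA v1 v3 v2 v0) (eA v3 v0 v2 v1) ∈ L)
    (gS : mS (eA v0 v1 v2 v3) (eA v1 v3 v2 v0) (eA v3 v0 v2 v1) ∈ L)
    (gt : eT v0 v1 v2 v3 ∈ L) (gI : eI v0 v1 v2 v3 ∈ L)
    (gT0 : s0 + s1 + s2 + s3 ∈ L)
    (gT1 : (v0 ^ 2 + v0) * s0 + (v1 ^ 2 + v1) * s1 + (v2 ^ 2 + v2) * s2 + (v3 ^ 2 + v3) * s3 ∈ L)
    (gT2 : (v0 ^ 2 + v0) ^ 2 * s0 + (v1 ^ 2 + v1) ^ 2 * s1 + (v2 ^ 2 + v2) ^ 2 * s2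
      + (v3 ^ 2 + v3) ^ 2 * s3 ∈ L)
    (gT3 : (v0 ^ 2 + v0) ^ 3 * s0 + (v1 ^ 2 + v1) ^ 3 * s1 + (v2 ^ 2 + v2) ^ 3 * s2
      + (v3 ^ 2 + v3) ^ 3 * s3 ∈ L) :
    0 < Module.finrank L F ∧ Module.finrank L F ≤ 24 := by
  have gE : eA v0 v1 v2 v3 + eA v1 v3 v2 v0 + eA v3 v0 v2 v1 ∈ L := by rw [eABC]; exact gt
  have gd : eD v0 v1 v2 v3 ∈ L := add_mem (add_mem (pow_mem gt 2) gt) (one_mem L)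
  have gt' : eT v1 v3 v2 v0 ∈ L := by rw [eT_phi]; exact gt
  have gt'' : eT v3 v0 v2 v1 ∈ L := by rw [eT_phi]; exact gt'
  have gd' : eD v1 v3 v2 v0 ∈ L := add_mem (add_mem (pow_mem gt' 2) gt') (one_mem L)
  obtain ⟨c2, c1, c0⟩ := masuda_coeffs L _ _ _ gP gS gE
  set a := eA v0 v1 v2 v3 with ha
  set l1 := eL v0 v1 v2 v3 with hl1
  set l2 := eL v1 v3 v2 v0 with hl2
  have le1 : L ≤ L ⊔ adjoin K {a} := le_sup_left
  have le2 : L ⊔ adjoin K {a} ≤ L ⊔ adjoin K {a} ⊔ adjoin K {l1} := le_sup_left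
  have le3 : L ⊔ adjoin K {a} ⊔ adjoin K {l1} ≤
    L ⊔ adjoin K {a} ⊔ adjoin K {l1} ⊔ adjoin K {l2} := le_sup_left
  have le4 : L ⊔ adjoin K {a} ⊔ adjoin K {l1} ⊔ adjoin K {l2} ≤
    L ⊔ adjoin K {a} ⊔ adjoin K {l1} ⊔ adjoin K {l2} ⊔ adjoin K {v2} := le_sup_left
  have m1 : a ∈ L ⊔ adjoin K {a} :=
    (le_sup_right : _ ≤ L ⊔ adjoin K {a}) (mem_adjoin_simple_self K _)
  have m2 : l1 ∈ L ⊔ adjoin K {a} ⊔ adjoin K {l1} :=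
    (le_sup_right : adjoin K {l1} ≤ _) (mem_adjoin_simple_self K _)
  have m3 : l2 ∈ L ⊔ adjoin K {a} ⊔ adjoin K {l1} ⊔ adjoin K {l2} :=
    (le_sup_right : adjoin K {l2} ≤ _) (mem_adjoin_simple_self K _)
  have m4 : v2 ∈ L ⊔ adjoin K {a} ⊔ adjoin K {l1} ⊔ adjoin K {l2} ⊔ adjoin K {v2} :=
    (le_sup_right : adjoin K {v2} ≤ _) (mem_adjoin_simple_self K _)
  set L1 := L ⊔ adjoin K {a} with hL1
  set L2 := L1 ⊔ adjoin K {l1} with hL2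
  set L3 := L2 ⊔ adjoin K {l2} with hL3
  set L4 := L3 ⊔ adjoin K {v2} with hL4
  have leL3 : L ≤ L3 := le1.trans (le2.trans le3)
  have leL : L ≤ L4 := leL3.trans le4
  obtain ⟨hb, hc⟩ := masuda_mem L1 _ _ _ hD hab hac (le1 gP) (le1 gS) (le1 gE) m1
  have mp : v0 + v2 ∈ L3 := by
    rw [eq_div_of_mul_eq hd (eP_eq v0 v1 v2 v3)]
    exact div_mem (add_mem (add_mem (add_mem m3 (pow_mem (leL3 gt) 2)) (leL3 gt))
      (mul_mem (leL3 gt) (add_mem (le3 m2) (pow_mem (leL3 gt) 2)))) (leL3 gd)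
  have mq : v1 + v2 ∈ L3 := by
    rw [eQ_eq v0 v1 v2 v3]
    exact add_mem (add_mem (le3 m2) (pow_mem (leL3 gt) 2))
      (mul_mem (add_mem (leL3 gt) (one_mem _)) mp)
  have mr : v3 + v2 ∈ L3 := by
    rw [eR_eq v0 v1 v2 v3]
    exact add_mem (add_mem (leL3 gt) mp) mq
  have mH : eH v0 v1 v2 v3 ∈ L3 := add_mem (add_mem (mul_mem mp mq) (mul_mem mq mr)) (mul_mem mr mp)
  have mE : ∀ {t u v : F}, t ∈ L3 → u ∈ L3 → v ∈ L3 → (1 + t) * u + v + t + 1 ∈ L3 :=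
    fun ht hu hv => add_mem (add_mem (add_mem (mul_mem (add_mem (one_mem _) ht) hu) hv) ht)
      (one_mem _)
  have mE0 : eE v0 v1 v2 v3 ∈ L3 := mE (leL3 gt) mp mq
  have mE1 : eE v1 v3 v2 v0 ∈ L3 := mE (leL3 gt') mq mr
  have mE3 : eE v3 v0 v2 v1 ∈ L3 := mE (leL3 gt'') mr mp
  have sq3 : ∀ {u : F}, u ∈ L3 → u ^ 2 + u ∈ L3 := fun h => add_mem (pow_mem h 2) h
  have sq : ∀ {u : F}, u ∈ L4 → u ^ 2 + u ∈ L4 := fun h => add_mem (pow_mem h 2) h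
  have nsub : ∀ {u v : F}, u - v ≠ 0 → v - u ≠ 0 := fun h h' => h (by linear_combination -h')
  have sub : ∀ {u : F}, u + v2 ∈ L3 → u ∈ L4 := by
    intro u h
    have := sub_mem (le4 h) m4
    rwa [add_sub_cancel_right] at this
  have k0 := sub mp
  have k1 := sub mq
  have k3 := sub mr
  refine tower_bound L a l1 l2 v2 _ _ _ (eD v0 v1 v2 v3) (a + eT v0 v1 v2 v3)
    (eD v1 v3 v2 v0) (eA v1 v3 v2 v0 + eT v1 v3 v2 v0) 1
    (-((eI v0 v1 v2 v3
      + ((v0 + v2) ^ 2 + (v0 + v2)) * (eH v0 v1 v2 v3 + eE v0 v1 v2 v3)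
      + ((v1 + v2) ^ 2 + (v1 + v2)) * (eH v0 v1 v2 v3 + eE v1 v3 v2 v0)
      + ((v3 + v2) ^ 2 + (v3 + v2)) * (eH v0 v1 v2 v3 + eE v3 v0 v2 v1)) / eD v0 v1 v2 v3))
    c2 c1 c0
    (masuda_cubic _ _ _ hD) (le1 gd) (add_mem m1 (le1 gt)) (eA_rel _ _ _ _) (le2 (le1 gd'))
    (add_mem (le2 hb) (le2 (le1 gt'))) (eA_rel _ _ _ _) (one_mem _) ?_ ?_ ?_
  · exact neg_mem (div_mem (add_mem (add_mem (add_mem (leL3 gI)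
      (mul_mem (sq3 mp) (add_mem mH mE0))) (mul_mem (sq3 mq) (add_mem mH mE1)))
      (mul_mem (sq3 mr) (add_mem mH mE3))) (leL3 gd))
  · rw [← eI_eq, mul_div_cancel_left₀ _ hd]; ring
  · apply hgen _ k0 k1 m4 k3
    · exact vander_mem L4 _ _ _ _ s0 s1 s2 s3 (sq k0) (sq k1) (sq m4) (sq k3)
        h01 h02 h03 (leL gT0) (leL gT1) (leL gT2) (leL gT3)
    · refine vander_mem L4 _ _ _ _ s1 s0 s2 s3 (sq k1) (sq k0) (sq m4) (sq k3)
        (nsub h01) h12 h13 ?_ ?_ ?_ ?_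
      · convert leL gT0 using 1; ring
      · convert leL gT1 using 1; ring
      · convert leL gT2 using 1; ring
      · convert leL gT3 using 1; ring
    · refine vander_mem L4 _ _ _ _ s2 s0 s1 s3 (sq m4) (sq k0) (sq k1) (sq k3)
        (nsub h02) (nsub h12) h23 ?_ ?_ ?_ ?_
      · convert leL gT0 using 1; ring
      · convert leL gT1 using 1; ring
      · convert leL gT2 using 1; ring
      · convert leL gT3 using 1; ring
    · refine vander_mem L4 _ _ _ _ s3 s0 s1 s2 (sq k3) (sq k0) (sq k1) (sq m4)
        (nsub h03) (nsub h13) (nsub h23) ?_ ?_ ?_ ?_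
      · convert leL gT0 using 1; ring
      · convert leL gT1 using 1; ring
      · convert leL gT2 using 1; ring
      · convert leL gT3 using 1; ring

theorem even_ne [CharP K 2] {v0 v1 v2 v3 s0 s1 s2 s3 : F}
    (hY : AlgebraicIndependent K ![v0, v1, v2, v3, s0, s1, s2, s3]) :
    (eD v0 v1 v2 v3 ≠ 0 ∧ eA v0 v1 v2 v3 - eA v1 v3 v2 v0 ≠ 0 ∧
    eA v0 v1 v2 v3 - eA v3 v0 v2 v1 ≠ 0 ∧
    eA v0 v1 v2 v3 ^ 2 + eA v1 v3 v2 v0 ^ 2 + eA v3 v0 v2 v1 ^ 2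
      - eA v0 v1 v2 v3 * eA v1 v3 v2 v0
      - eA v1 v3 v2 v0 * eA v3 v0 v2 v1 - eA v3 v0 v2 v1 * eA v0 v1 v2 v3 ≠ 0) ∧
    ((v0 ^ 2 + v0) - (v1 ^ 2 + v1) ≠ 0 ∧ (v0 ^ 2 + v0) - (v2 ^ 2 + v2) ≠ 0 ∧
     (v0 ^ 2 + v0) - (v3 ^ 2 + v3) ≠ 0 ∧ (v1 ^ 2 + v1) - (v2 ^ 2 + v2) ≠ 0 ∧
     (v1 ^ 2 + v1) - (v3 ^ 2 + v3) ≠ 0 ∧ (v2 ^ 2 + v2) - (v3 ^ 2 + v3) ≠ 0) := by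
  have q0 : (Polynomial.X ^ 2 + Polynomial.X : Polynomial K) ≠ 0 := by
    apply Polynomial.Monic.ne_zero; monicity!
  have q1 : (Polynomial.X ^ 2 + Polynomial.X ^ 3 : Polynomial K) ≠ 0 := by
    apply Polynomial.Monic.ne_zero; monicity!
  have q2 : (Polynomial.X ^ 3 + Polynomial.X : Polynomial K) ≠ 0 := by
    apply Polynomial.Monic.ne_zero; monicity!
  have q3 : (Polynomial.X ^ 6 + Polynomial.X ^ 5 + Polynomial.X ^ 3 + Polynomial.X ^ 2
      : Polynomial K) ≠ 0 := by
    apply Polynomial.Monic.ne_zero; monicity!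
  have ea : eA 0 Polynomial.X 0 0 = (Polynomial.X ^ 2 : Polynomial K) := by
    generalize (Polynomial.X : Polynomial K) = X
    simp only [eA, eL, eD, eT]; grind
  have eb : eA Polynomial.X 0 0 0 = (Polynomial.X ^ 3 : Polynomial K) := by
    generalize (Polynomial.X : Polynomial K) = X
    simp only [eA, eL, eD, eT]; grind
  have ec : eA 0 0 0 Polynomial.X = (Polynomial.X ^ 3 + Polynomial.X ^ 2 + Polynomial.X :
      Polynomial K) := by
    generalize (Polynomial.X : Polynomial K) = X
    simp only [eA, eL, eD, eT]; grind
  let f0 : Fin 8 → Polynomial K := ![Polynomial.X, 0, 0, 0, 0, 0, 0, 0]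
  let f1 : Fin 8 → Polynomial K := ![0, Polynomial.X, 0, 0, 0, 0, 0, 0]
  let f2 : Fin 8 → Polynomial K := ![0, 0, Polynomial.X, 0, 0, 0, 0, 0]
  let z : Fin 8 → Polynomial K := ![0, 0, 0, 0, 0, 0, 0, 0]
  let V0 : MvPolynomial (Fin 8) K := MvPolynomial.X 0
  let V1 : MvPolynomial (Fin 8) K := MvPolynomial.X 1
  let V2 : MvPolynomial (Fin 8) K := MvPolynomial.X 2
  let V3 : MvPolynomial (Fin 8) K := MvPolynomial.X 3
  have hA : ∀ (A : Type) [CommRing A] [Algebra K A] (f : Fin 8 → A)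
      (a b c d : MvPolynomial (Fin 8) K), MvPolynomial.aeval f (eA a b c d) =
      eA (MvPolynomial.aeval f a) (MvPolynomial.aeval f b) (MvPolynomial.aeval f c)
        (MvPolynomial.aeval f d) := by
    intro A _ _ f a b c d
    exact map_eA (MvPolynomial.aeval f).toRingHom a b c d
  refine ⟨⟨?_, ?_, ?_, ?_⟩, ⟨?_, ?_, ?_, ?_, ?_, ?_⟩⟩
  · have := nz_of_special hY (eD V0 V1 V2 V3) z (by simp [eD, eT, z, V0, V1, V2, V3])
    simpa only [eD, eT, V0, V1, V2, V3, map_add, map_pow, map_one, MvPolynomial.aeval_X,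
      Matrix.cons_val] using this
  · have := nz_of_special hY (eA V0 V1 V2 V3 - eA V1 V3 V2 V0) f1 (by
      simp only [f1, V0, V1, V2, V3, map_sub, hA, MvPolynomial.aeval_X, Matrix.cons_val, ea, eb]
      rwa [CharTwo.sub_eq_add])
    simpa only [V0, V1, V2, V3, map_sub, hA, MvPolynomial.aeval_X, Matrix.cons_val] using this
  · have := nz_of_special hY (eA V0 V1 V2 V3 - eA V3 V0 V2 V1) f1 (by
      simp only [f1, V0, V1, V2, V3, map_sub, hA, MvPolynomial.aeval_X, Matrix.cons_val, ea, ec]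
      rw [CharTwo.sub_eq_add]
      convert q2 using 1
      generalize (Polynomial.X : Polynomial K) = X
      grind)
    simpa only [V0, V1, V2, V3, map_sub, hA, MvPolynomial.aeval_X, Matrix.cons_val] using this
  · have := nz_of_special hY (eA V0 V1 V2 V3 ^ 2 + eA V1 V3 V2 V0 ^ 2 + eA V3 V0 V2 V1 ^ 2
      - eA V0 V1 V2 V3 * eA V1 V3 V2 V0
      - eA V1 V3 V2 V0 * eA V3 V0 V2 V1 - eA V3 V0 V2 V1 * eA V0 V1 V2 V3) f1 (by
      simp only [f1, V0, V1, V2, V3, map_sub, map_add, map_mul, map_pow, hA, MvPolynomial.aeval_X,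
        Matrix.cons_val, ea, eb, ec]
      convert q3 using 1
      generalize (Polynomial.X : Polynomial K) = X
      grind)
    simpa only [V0, V1, V2, V3, map_sub, map_add, map_mul, map_pow, hA, MvPolynomial.aeval_X,
      Matrix.cons_val] using this
  · have := nz_of_special hY ((V0 ^ 2 + V0) - (V1 ^ 2 + V1)) f0 (by simpa [f0, V0, V1] using q0)
    simpa only [V0, V1, map_sub, map_add, map_pow, MvPolynomial.aeval_X, Matrix.cons_val] using this
  · have := nz_of_special hY ((V0 ^ 2 + V0) - (V2 ^ 2 + V2)) f0 (by simpa [f0, V0, V2] using q0)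
    simpa only [V0, V2, map_sub, map_add, map_pow, MvPolynomial.aeval_X, Matrix.cons_val] using this
  · have := nz_of_special hY ((V0 ^ 2 + V0) - (V3 ^ 2 + V3)) f0 (by simpa [f0, V0, V3] using q0)
    simpa only [V0, V3, map_sub, map_add, map_pow, MvPolynomial.aeval_X, Matrix.cons_val] using this
  · have := nz_of_special hY ((V1 ^ 2 + V1) - (V2 ^ 2 + V2)) f1 (by simpa [f1, V1, V2] using q0)
    simpa only [V1, V2, map_sub, map_add, map_pow, MvPolynomial.aeval_X, Matrix.cons_val] using this
  · have := nz_of_special hY ((V1 ^ 2 + V1) - (V3 ^ 2 + V3)) f1 (by simpa [f1, V1, V3] using q0)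
    simpa only [V1, V3, map_sub, map_add, map_pow, MvPolynomial.aeval_X, Matrix.cons_val] using this
  · have := nz_of_special hY ((V2 ^ 2 + V2) - (V3 ^ 2 + V3)) f2 (by simpa [f2, V2, V3] using q0)
    simpa only [V2, V3, map_sub, map_add, map_pow, MvPolynomial.aeval_X, Matrix.cons_val] using this

/-- The eight generators when `char K = 2`. -/
def evenGen (v0 v1 v2 v3 s0 s1 s2 s3 : F) : Fin 8 → F :=
  ![mP (eA v0 v1 v2 v3) (eA v1 v3 v2 v0) (eA v3 v0 v2 v1),
    mS (eA v0 v1 v2 v3) (eA v1 v3 v2 v0) (eA v3 v0 v2 v1),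
    eT v0 v1 v2 v3, eI v0 v1 v2 v3,
    s0 + s1 + s2 + s3,
    (v0 ^ 2 + v0) * s0 + (v1 ^ 2 + v1) * s1 + (v2 ^ 2 + v2) * s2 + (v3 ^ 2 + v3) * s3,
    (v0 ^ 2 + v0) ^ 2 * s0 + (v1 ^ 2 + v1) ^ 2 * s1 + (v2 ^ 2 + v2) ^ 2 * s2
      + (v3 ^ 2 + v3) ^ 2 * s3,
    (v0 ^ 2 + v0) ^ 3 * s0 + (v1 ^ 2 + v1) ^ 3 * s1 + (v2 ^ 2 + v2) ^ 3 * s2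
      + (v3 ^ 2 + v3) ^ 3 * s3]

theorem map_evenGen (σ : F ≃ₐ[K] F) (v0 v1 v2 v3 s0 s1 s2 s3 : F) (i : Fin 8) :
    σ (evenGen v0 v1 v2 v3 s0 s1 s2 s3 i) =
      evenGen (σ v0) (σ v1) (σ v2) (σ v3) (σ s0) (σ s1) (σ s2) (σ s3) i := by
  have hA : ∀ a b c d, σ (eA a b c d) = eA (σ a) (σ b) (σ c) (σ d) := fun a b c d =>
    map_eA (σ : F →+* F) a b c d
  have hI : ∀ a b c d, σ (eI a b c d) = eI (σ a) (σ b) (σ c) (σ d) := fun a b c d =>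
    map_eI (σ : F →+* F) a b c d
  fin_cases i <;> simp [evenGen, map_mP, map_mS, hA, hI, eT]

theorem evenGen_phi [CharP F 2] (v0 v1 v2 v3 s0 s1 s2 s3 : F) :
    evenGen v1 v3 v2 v0 s1 s3 s2 s0 = evenGen v0 v1 v2 v3 s0 s1 s2 s3 := by
  unfold evenGen
  rw [mP_cycle, mS_cycle, eT_phi, eI_phi]
  congr 4
  congr 1
  · ring
  congr 1
  · ring
  congr 1
  · ring
  congr 1
  · ring

theorem evenGen_psi [CharP F 2] (v0 v1 v2 v3 s0 s1 s2 s3 : F) :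
    evenGen v2 v3 (v0 + 1) (v1 + 1) s2 s3 s0 s1 = evenGen v0 v1 v2 v3 s0 s1 s2 s3 := by
  have sq : ∀ v : F, (v + 1) ^ 2 + (v + 1) = v ^ 2 + v := by intro v; grind
  unfold evenGen
  rw [eA_psi, eB_psi, eC_psi, eT_psi, eI_psi, sq, sq]
  congr 4
  congr 1
  · ring
  congr 1
  · ring
  congr 1
  · ring
  congr 1
  · ring

theorem even_case (K : Type) [Field K] (h2 : (2 : K) = 0) :
    IsRatExt K ↥(fixedSub K (Fin 8) (Subgroup.closure {gPhi, gPsi})) := by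
  have hK : CharP K 2 := CharTwo.of_one_ne_zero_of_two_eq_zero one_ne_zero h2
  have hF2 : (2 : RFF K (Fin 8)) = 0 := by
    have := congrArg (algebraMap K (RFF K (Fin 8))) h2
    simpa only [map_ofNat, map_zero] using this
  have hF : CharP (RFF K (Fin 8)) 2 := CharTwo.of_one_ne_zero_of_two_eq_zero one_ne_zero hF2
  let X := Xvar K (Fin 8)
  have hX : ∀ i j, i ≠ j → X i + X j ≠ 0 := by
    intro i j hij h
    rw [CharTwo.add_eq_zero] at h
    exact hij (MvPolynomial.X_injective
      (IsFractionRing.injective (MvPolynomial (Fin 8) K) (RFF K (Fin 8)) h))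
  have n0 : X 0 + X 4 ≠ 0 := hX _ _ (by decide)
  have n1 : X 1 + X 5 ≠ 0 := hX _ _ (by decide)
  have n2 : X 2 + X 6 ≠ 0 := hX _ _ (by decide)
  have n3 : X 3 + X 7 ≠ 0 := hX _ _ (by decide)
  have hgen : ∀ M : IntermediateField K (RFF K (Fin 8)),
      X 0 / (X 0 + X 4) ∈ M → X 1 / (X 1 + X 5) ∈ M → X 2 / (X 2 + X 6) ∈ M →
      X 3 / (X 3 + X 7) ∈ M → X 0 + X 4 ∈ M → X 1 + X 5 ∈ M →
      X 2 + X 6 ∈ M → X 3 + X 7 ∈ M → M = ⊤ := by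
    intro M k0 k1 k2 k3 h0 h1 h2 h3
    have half : ∀ u v : RFF K (Fin 8), u + v ≠ 0 → u / (u + v) ∈ M → u + v ∈ M →
        u ∈ M ∧ v ∈ M := by
      intro u v hn h h'
      have hu : u ∈ M := by
        have := mul_mem h h'
        rwa [div_mul_cancel₀ _ hn] at this
      refine ⟨hu, ?_⟩
      have := sub_mem h' hu
      rwa [add_sub_cancel_left] at this
    have a0 := half _ _ n0 k0 h0
    have a1 := half _ _ n1 k1 h1
    have a2 := half _ _ n2 k2 h2
    have a3 := half _ _ n3 k3 h3
    apply adjoin_X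
    intro i
    fin_cases i
    exacts [a0.1, a1.1, a2.1, a3.1, a0.2, a1.2, a2.2, a3.2]
  have hY : AlgebraicIndependent K ![X 0 / (X 0 + X 4), X 1 / (X 1 + X 5), X 2 / (X 2 + X 6),
      X 3 / (X 3 + X 7), X 0 + X 4, X 1 + X 5, X 2 + X 6, X 3 + X 7] := by
    apply algInd_of_gen (trdeg_RFF K)
    have hm := fun i => IntermediateField.subset_adjoin K (Set.range ![X 0 / (X 0 + X 4),
      X 1 / (X 1 + X 5), X 2 / (X 2 + X 6),
      X 3 / (X 3 + X 7), X 0 + X 4, X 1 + X 5, X 2 + X 6, X 3 + X 7]) ⟨i, rfl⟩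
    exact hgen _ (hm 0) (hm 1) (hm 2) (hm 3) (hm 4) (hm 5) (hm 6) (hm 7)
  obtain ⟨⟨p1, p2, p3, p4⟩, ⟨r1, r2, r3, r4, r5, r6⟩⟩ := even_ne hY
  set t := evenGen (X 0 / (X 0 + X 4)) (X 1 / (X 1 + X 5)) (X 2 / (X 2 + X 6)) (X 3 / (X 3 + X 7))
      (X 0 + X 4) (X 1 + X 5) (X 2 + X 6) (X 3 + X 7) with ht
  have hm := fun i => IntermediateField.subset_adjoin K (Set.range t) ⟨i, rfl⟩
  have hb := even_tower (X 0 / (X 0 + X 4)) (X 1 / (X 1 + X 5)) (X 2 / (X 2 + X 6))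
      (X 3 / (X 3 + X 7)) (X 0 + X 4) (X 1 + X 5) (X 2 + X 6) (X 3 + X 7)
      (IntermediateField.adjoin K (Set.range t))
      hgen p1 p2 p3 p4 r1 r2 r3 r4 r5 r6 (hm 0) (hm 1) (hm 2) (hm 3) (hm 4) (hm 5)
      (hm 6) (hm 7)
  refine reduce K t ?_ ?_ hb.1 hb.2
  · intro i
    rw [ht, map_evenGen]
    obtain ⟨e0, e1, e2, e3, e4, e5, e6, e7⟩ := gPhi_vals
    simp only [X, map_div₀, map_add, permHom_X, e0, e1, e2, e3, e4, e5, e6, e7]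
    exact congrFun (evenGen_phi _ _ _ _ _ _ _ _) i
  · intro i
    rw [ht, map_evenGen]
    obtain ⟨e0, e1, e2, e3, e4, e5, e6, e7⟩ := gPsi_vals
    simp only [X, map_div₀, map_add, permHom_X, e0, e1, e2, e3, e4, e5, e6, e7]
    have e := congrFun (evenGen_psi (X 0 / (X 0 + X 4)) (X 1 / (X 1 + X 5)) (X 2 / (X 2 + X 6))
      (X 3 / (X 3 + X 7)) (X 0 + X 4) (X 1 + X 5) (X 2 + X 6) (X 3 + X 7)) i
    refine Eq.trans ?_ e
    have sw : ∀ u v : RFF K (Fin 8), u + v ≠ 0 → v / (v + u) = u / (u + v) + 1 := by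
      intro u v hn
      rw [add_comm v u, div_add_one hn]
      congr 1
      grind
    rw [← sw _ _ n0, ← sw _ _ n1]
    simp only [X]
    congr 1 <;> exact add_comm _ _

end evenmain

/-- **Rationality for `G₁₂ ≃ SL(2,3)`.** For any field `K`, the subgroup `G₁₂ ⊆ S₈` generated by `Φ = (1,2,4)(5,6,8)` and `Ψ̃ = (1,3,5,7)(2,4,6,8)` (of order 24, isomorphic to `SL(2,3)`) has `K`-rational fixed field. -/
theorem rationality_G12 (K : Type) [Field K] :
    IsRatExt K ↥(fixedSub K (Fin 8) (Subgroup.closure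
      {(Equiv.swap (0 : Fin 8) 1 * Equiv.swap 1 3) * (Equiv.swap (4 : Fin 8) 5 * Equiv.swap 5 7),
       (Equiv.swap (0 : Fin 8) 2 * Equiv.swap 2 4 * Equiv.swap 4 6) * (Equiv.swap (1 : Fin 8) 3 * Equiv.swap 3 5 * Equiv.swap 5 7)})) := by
  by_cases h2 : (2 : K) = 0
  · exact even_case K h2
  · exact odd_case K h2
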